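/- Let 0 < δ < 3/2 and let u be an admissible map with D_δ(u) = 0 and ‖u‖ ≠ 0. Then E(u) ≥ a(δ)·r(δ)², where a(δ) = 1/2 − δ/3 and r(δ) = 2√(2π)·δ/H. (Hence the potential-well depth d(δ) = inf{E(u) : D_δ(u) = 0, ‖u‖ ≠ 0} satisfies d(δ) ≥ a(δ)r(δ)².) -/

import Mathlib

open MeasureTheory Real Filter

/-- x-partial derivative of a map `u : ℝ² → ℝ³`. -/
noncomputable def pderivX (u : ℝ × ℝ → Fin 3 → ℝ) (p : ℝ × ℝ) : Fin 3 → ℝ :=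
  fderiv ℝ u p (1, 0)

/-- y-partial derivative of a map `u : ℝ² → ℝ³`. -/
noncomputable def pderivY (u : ℝ × ℝ → Fin 3 → ℝ) (p : ℝ × ℝ) : Fin 3 → ℝ :=
  fderiv ℝ u p (0, 1)

/-- Euclidean dot product on `ℝ³`. -/
def dot3 (a b : Fin 3 → ℝ) : ℝ := ∑ i, a i * b i

/-- Squared Dirichlet norm `‖u‖² = ∫_Ω |∇u|²`. -/
noncomputable def dirEnergy (Ω : Set (ℝ × ℝ)) (u : ℝ × ℝ → Fin 3 → ℝ) : ℝ :=
  ∫ p in Ω, (dot3 (pderivX u p) (pderivX u p) + dot3 (pderivY u p) (pderivY u p))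

/-- Dirichlet norm `‖u‖`. -/
noncomputable def dnorm (Ω : Set (ℝ × ℝ)) (u : ℝ × ℝ → Fin 3 → ℝ) : ℝ :=
  Real.sqrt (dirEnergy Ω u)

/-- Volume functional `V(u) = ∫_Ω u · (u_x ∧ u_y)`. -/
noncomputable def vol (Ω : Set (ℝ × ℝ)) (u : ℝ × ℝ → Fin 3 → ℝ) : ℝ :=
  ∫ p in Ω, dot3 (u p) (crossProduct (pderivX u p) (pderivY u p))

/-- An admissible map: smooth with compact support contained in `Ω`. -/
def IsAdmissible (Ω : Set (ℝ × ℝ)) (u : ℝ × ℝ → Fin 3 → ℝ) : Prop :=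
  ContDiff ℝ (⊤ : ℕ∞) u ∧ HasCompactSupport u ∧ tsupport u ⊆ Ω

/-- Energy functional `E(u) = (1/2)‖u‖² + (2H/3)·V(u)`. -/
noncomputable def Efun (Ω : Set (ℝ × ℝ)) (H : ℝ) (u : ℝ × ℝ → Fin 3 → ℝ) : ℝ :=
  (1 / 2) * dirEnergy Ω u + (2 * H / 3) * vol Ω u

/-- Modified Nehari functional `D_δ(u) = δ‖u‖² + 2H·V(u)`; `D = D₁`. -/
noncomputable def Dfun (Ω : Set (ℝ × ℝ)) (H δ : ℝ) (u : ℝ × ℝ → Fin 3 → ℝ) : ℝ :=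
  δ * dirEnergy Ω u + 2 * H * vol Ω u

/-- The radius `r(δ) = 2√(2π)·δ/H`. -/
noncomputable def rPW (H δ : ℝ) : ℝ := 2 * Real.sqrt (2 * Real.pi) * δ / H

/-- The coefficient `a(δ) = 1/2 − δ/3`. -/
noncomputable def aPW (δ : ℝ) : ℝ := 1 / 2 - δ / 3

/-!
Let `w y` be the winding number of the surface `u` around `y`, that is, the degree at `y` of the
cone over `u`. Its integral is `V(u) / 3`, and by Stokes' theorem its distributional gradient is, up
to sign, the push-forward of `(u_x ∧ u_y) dx dy`, whose total variation is at most the area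
`∫ |u_x ∧ u_y| ≤ ‖u‖² / 2`. As `w` is integer-valued, `|w| ≤ |w| ^ (3 / 2)`, so the inequality
`3 |B₁| ^ (1 / 3) (∫ |w| ^ (3 / 2)) ^ (2 / 3) ≤ |Dw|(ℝ³)`, with its sharp constant obtained from the
Brunn–Minkowski inequality, gives `32 π V(u)² ≤ ‖u‖⁶`. On `D_δ(u) = 0` one has
`δ² ‖u‖⁴ = 4 H² V(u)²` and `E(u) = a(δ) ‖u‖²`, whence `‖u‖² ≥ 8 π δ² / H² = r(δ)²`.
-/

open Set Topology
open scoped ENNReal Pointwise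

section PrekopaLeindler

lemma geom_mean_le_arith_mean_ennreal {a b : ℝ} (ha : 0 < a) (hb : 0 < b) (hab : a + b = 1)
    (x y : ℝ≥0∞) : x ^ a * y ^ b ≤ ENNReal.ofReal a * x + ENNReal.ofReal b * y := by
  have hconj : a⁻¹.HolderConjugate b⁻¹ := .inv_inv ha hb hab
  calc x ^ a * y ^ b
      ≤ (x ^ a) ^ a⁻¹ / ENNReal.ofReal a⁻¹ + (y ^ b) ^ b⁻¹ / ENNReal.ofReal b⁻¹ :=
        ENNReal.young_inequality _ _ hconj
    _ = ENNReal.ofReal a * x + ENNReal.ofReal b * y := by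
        rw [← ENNReal.rpow_mul, ← ENNReal.rpow_mul, mul_inv_cancel₀ ha.ne', mul_inv_cancel₀ hb.ne',
          ENNReal.rpow_one, ENNReal.rpow_one, ENNReal.ofReal_inv_of_pos ha,
          ENNReal.ofReal_inv_of_pos hb, div_eq_mul_inv, div_eq_mul_inv, inv_inv, inv_inv,
          mul_comm x, mul_comm y]

lemma volume_add_le_volume_add_of_isCompact {K L : Set ℝ} (hK : IsCompact K) (hL : IsCompact L)
    (hK₀ : K.Nonempty) (hL₀ : L.Nonempty) : volume K + volume L ≤ volume (K + L) := by
  obtain ⟨k, hkK, hk⟩ := hK.exists_isGreatest hK₀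
  obtain ⟨l, hlL, hl⟩ := hL.exists_isLeast hL₀
  have hinter : ((l +ᵥ K) ∩ (k +ᵥ L)) ⊆ {k + l} := by
    rintro _ ⟨⟨x, hx, rfl⟩, ⟨y, hy, hxy⟩⟩
    have hx' := hk hx
    have hy' := hl hy
    simp only [vadd_eq_add] at hxy ⊢
    exact mem_singleton_iff.2 (by linarith)
  have hdisj : AEDisjoint volume (l +ᵥ K) (k +ᵥ L) :=
    measure_mono_null hinter Real.volume_singleton
  calc volume K + volume L = volume (l +ᵥ K) + volume (k +ᵥ L) := by
        simp only [measure_vadd]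
    _ = volume ((l +ᵥ K) ∪ (k +ᵥ L)) :=
        (measure_union₀ (hL.vadd k).measurableSet.nullMeasurableSet hdisj).symm
    _ ≤ volume (K + L) := measure_mono <| by
        rintro _ (⟨x, hx, rfl⟩ | ⟨y, hy, rfl⟩)
        · exact ⟨x, hx, l, hlL, add_comm _ _⟩
        · exact ⟨k, hkK, y, hy, rfl⟩

lemma volume_add_le_volume_add {A B : Set ℝ} (hA : MeasurableSet A) (hB : MeasurableSet B)
    (hA₀ : A.Nonempty) (hB₀ : B.Nonempty) : volume A + volume B ≤ volume (A + B) := by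
  obtain ⟨x, hx⟩ := hA₀
  obtain ⟨y, hy⟩ := hB₀
  rw [hA.measure_eq_iSup_isCompact, hB.measure_eq_iSup_isCompact]
  simp_rw [iSup_and']
  refine ENNReal.biSup_add_biSup_le' ⟨∅, empty_subset A, isCompact_empty⟩
    ⟨∅, empty_subset B, isCompact_empty⟩ fun K ⟨hKA, hK⟩ L ⟨hLB, hL⟩ => ?_
  calc volume K + volume L ≤ volume (insert x K) + volume (insert y L) :=
        add_le_add (measure_mono (subset_insert x K)) (measure_mono (subset_insert y L))
    _ ≤ volume (insert x K + insert y L) :=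
        volume_add_le_volume_add_of_isCompact (hK.insert x) (hL.insert y) (insert_nonempty x K)
          (insert_nonempty y L)
    _ ≤ volume (A + B) :=
        measure_mono (add_subset_add (insert_subset hx hKA) (insert_subset hy hLB))

lemma setLIntegral_measure_lt_eq_lintegral_min {X : Type*} [MeasurableSpace X] (μ : Measure X)
    [SFinite μ] {f : X → ℝ≥0∞} (hf : Measurable f) :
    ∫⁻ t in Ioo (0 : ℝ) 1, μ {x | ENNReal.ofReal t < f x} = ∫⁻ x, min 1 (f x) ∂μ := by
  have hmeas : MeasurableSet {q : ℝ × X | ENNReal.ofReal q.1 < f q.2} :=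
    measurableSet_lt (ENNReal.measurable_ofReal.comp measurable_fst) (hf.comp measurable_snd)
  have hsection : ∀ c : ℝ≥0∞, volume ({t | ENNReal.ofReal t < c} ∩ Ioo (0 : ℝ) 1) = min 1 c := by
    intro c
    rcases eq_or_ne c ∞ with rfl | hc
    · simp
    · have : {t | ENNReal.ofReal t < c} ∩ Ioo (0 : ℝ) 1 = Ioo 0 (min 1 c.toReal) := by
        ext t
        simp only [mem_inter_iff, mem_ofPred_eq, mem_Ioo, lt_min_iff]
        constructor
        · rintro ⟨h, h0, h1⟩
          exact ⟨h0, h1, (ENNReal.ofReal_lt_iff_lt_toReal h0.le hc).1 h⟩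
        · rintro ⟨h0, h1, h⟩
          exact ⟨(ENNReal.ofReal_lt_iff_lt_toReal h0.le hc).2 h, h0, h1⟩
      rw [this, Real.volume_Ioo, sub_zero, ENNReal.ofReal_min, ENNReal.ofReal_one,
        ENNReal.ofReal_toReal hc]
  calc ∫⁻ t in Ioo (0 : ℝ) 1, μ {x | ENNReal.ofReal t < f x}
      = ((volume.restrict (Ioo (0 : ℝ) 1)).prod μ) {q | ENNReal.ofReal q.1 < f q.2} :=
        (Measure.prod_apply hmeas).symm
    _ = ∫⁻ x, (volume.restrict (Ioo (0 : ℝ) 1)) {t | ENNReal.ofReal t < f x} ∂μ :=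
        Measure.prod_apply_symm hmeas
    _ = ∫⁻ x, min 1 (f x) ∂μ := by
        refine lintegral_congr fun x => ?_
        rw [Measure.restrict_apply (measurableSet_lt ENNReal.measurable_ofReal measurable_const),
          hsection]

lemma volume_level_add_le_of_rpow_mul_rpow_le {a b : ℝ} (ha : 0 < a) (hb : 0 < b)
    (hab : a + b = 1) {f g h : ℝ → ℝ≥0∞} (hf : Measurable f) (hg : Measurable g)
    (hfgh : ∀ x y, f x ^ a * g y ^ b ≤ h (a * x + b * y)) {c : ℝ≥0∞} (hc₀ : c ≠ 0)
    (hc : c ≠ ∞) (hcf : c < ⨆ x, f x) (hcg : c < ⨆ y, g y) :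
    ENNReal.ofReal a * volume {x | c < f x} + ENNReal.ofReal b * volume {y | c < g y}
      ≤ volume {z | c < h z} := by
  have hlevel {k : ℝ → ℝ≥0∞} (hk : Measurable k) : MeasurableSet {x | c < k x} :=
    measurableSet_lt measurable_const hk
  have hnonempty {k : ℝ → ℝ≥0∞} (hk : c < ⨆ x, k x) : {x | c < k x}.Nonempty := lt_iSup_iff.1 hk
  have hsub : a • {x | c < f x} + b • {y | c < g y} ⊆ {z | c < h z} := by
    rintro _ ⟨_, ⟨x, hx, rfl⟩, _, ⟨y, hy, rfl⟩, rfl⟩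
    calc c = c ^ a * c ^ b := by rw [← ENNReal.rpow_add _ _ hc₀ hc, hab, ENNReal.rpow_one]
      _ < f x ^ a * g y ^ b :=
          ENNReal.mul_lt_mul (ENNReal.rpow_lt_rpow hx ha) (ENNReal.rpow_lt_rpow hy hb)
      _ ≤ h (a * x + b * y) := hfgh x y
  calc ENNReal.ofReal a * volume {x | c < f x} + ENNReal.ofReal b * volume {y | c < g y}
      = volume (a • {x | c < f x}) + volume (b • {y | c < g y}) := by
        simp only [Measure.addHaar_smul, Module.finrank_self, pow_one, abs_of_pos ha, abs_of_pos hb]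
    _ ≤ volume (a • {x | c < f x} + b • {y | c < g y}) :=
        volume_add_le_volume_add ((hlevel hf).const_smul_of_ne_zero ha.ne')
          ((hlevel hg).const_smul_of_ne_zero hb.ne') (hnonempty hcf).smul_set
          (hnonempty hcg).smul_set
    _ ≤ volume {z | c < h z} := measure_mono hsub

lemma add_lintegral_le_lintegral_of_iSup_eq_one {a b : ℝ} (ha : 0 < a) (hb : 0 < b)
    (hab : a + b = 1) {f g h : ℝ → ℝ≥0∞} (hf : Measurable f) (hg : Measurable g)
    (hh : Measurable h) (hf₁ : ⨆ x, f x = 1) (hg₁ : ⨆ y, g y = 1)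
    (hfgh : ∀ x y, f x ^ a * g y ^ b ≤ h (a * x + b * y)) :
    ENNReal.ofReal a * (∫⁻ x, f x) + ENNReal.ofReal b * (∫⁻ y, g y) ≤ ∫⁻ z, h z := by
  have layer_cake {k : ℝ → ℝ≥0∞} (hk : Measurable k) (hk₁ : ⨆ x, k x = 1) :
      ∫⁻ t in Ioo (0 : ℝ) 1, volume {x | ENNReal.ofReal t < k x} = ∫⁻ x, k x := by
    rw [setLIntegral_measure_lt_eq_lintegral_min volume hk]
    exact lintegral_congr fun x => min_eq_right (hk₁ ▸ le_iSup k x)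
  have hlevel (k : ℝ → ℝ≥0∞) : Measurable fun t : ℝ => volume {x | ENNReal.ofReal t < k x} :=
    Antitone.measurable fun s t hst => measure_mono fun x hx =>
      (ENNReal.ofReal_le_ofReal hst).trans_lt hx
  calc ENNReal.ofReal a * (∫⁻ x, f x) + ENNReal.ofReal b * (∫⁻ y, g y)
      = ∫⁻ t in Ioo (0 : ℝ) 1, (ENNReal.ofReal a * volume {x | ENNReal.ofReal t < f x}
          + ENNReal.ofReal b * volume {y | ENNReal.ofReal t < g y}) := by
        rw [lintegral_add_left ((hlevel f).const_mul _), lintegral_const_mul _ (hlevel f),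
          lintegral_const_mul _ (hlevel g), layer_cake hf hf₁, layer_cake hg hg₁]
    _ ≤ ∫⁻ t in Ioo (0 : ℝ) 1, volume {z | ENNReal.ofReal t < h z} := by
        refine setLIntegral_mono (hlevel h) fun t ht => ?_
        have ht₁ : ENNReal.ofReal t < 1 := by simpa using ht.2
        exact volume_level_add_le_of_rpow_mul_rpow_le ha hb hab hf hg hfgh (by simpa using ht.1)
          ENNReal.ofReal_ne_top (hf₁ ▸ ht₁) (hg₁ ▸ ht₁)
    _ = ∫⁻ z, min 1 (h z) := setLIntegral_measure_lt_eq_lintegral_min volume hh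
    _ ≤ ∫⁻ z, h z := lintegral_mono fun z => min_le_right _ _

lemma prekopa_leindler_real_of_iSup_ne_top {a b : ℝ} (ha : 0 < a) (hb : 0 < b)
    (hab : a + b = 1) {f g h : ℝ → ℝ≥0∞} (hf : Measurable f) (hg : Measurable g)
    (hh : Measurable h) (hf_top : ⨆ x, f x ≠ ∞) (hg_top : ⨆ y, g y ≠ ∞)
    (hfgh : ∀ x y, f x ^ a * g y ^ b ≤ h (a * x + b * y)) :
    (∫⁻ x, f x) ^ a * (∫⁻ y, g y) ^ b ≤ ∫⁻ z, h z := by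
  set F := ⨆ x, f x
  set G := ⨆ y, g y
  rcases eq_or_ne F 0 with hF | hF
  · simp [ENNReal.iSup_eq_zero.1 hF, ha]
  rcases eq_or_ne G 0 with hG | hG
  · simp [ENNReal.iSup_eq_zero.1 hG, hb]
  set C := (F ^ a * G ^ b)⁻¹ with hC
  have hF' : F ^ a ≠ 0 ∧ F ^ a ≠ ∞ := by simp [hF, hf_top]
  have hG' : G ^ b ≠ 0 ∧ G ^ b ≠ ∞ := by simp [hG, hg_top]
  have normalize (x y : ℝ≥0∞) : (F⁻¹ * x) ^ a * (G⁻¹ * y) ^ b = C * (x ^ a * y ^ b) := by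
    rw [ENNReal.mul_rpow_of_nonneg _ _ ha.le, ENNReal.mul_rpow_of_nonneg _ _ hb.le,
      ENNReal.inv_rpow, ENNReal.inv_rpow, mul_mul_mul_comm, hC,
      ENNReal.mul_inv (Or.inl hF'.1) (Or.inl hF'.2)]
  have hC₀ : C ≠ 0 := ENNReal.inv_ne_zero.2 (ENNReal.mul_ne_top hF'.2 hG'.2)
  have hC_top : C ≠ ∞ := ENNReal.inv_ne_top.2 (mul_ne_zero hF'.1 hG'.1)
  have hsup {k : ℝ → ℝ≥0∞} (h₀ : ⨆ x, k x ≠ 0) (h_top : ⨆ x, k x ≠ ∞) :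
      ⨆ x, (⨆ x, k x)⁻¹ * k x = 1 := by
    rw [← ENNReal.mul_iSup, ENNReal.inv_mul_cancel h₀ h_top]
  refine (ENNReal.mul_le_mul_iff_right hC₀ hC_top).1 ?_
  calc C * ((∫⁻ x, f x) ^ a * (∫⁻ y, g y) ^ b)
      = (∫⁻ x, F⁻¹ * f x) ^ a * (∫⁻ y, G⁻¹ * g y) ^ b := by
        rw [lintegral_const_mul _ hf, lintegral_const_mul _ hg, normalize]
    _ ≤ ENNReal.ofReal a * (∫⁻ x, F⁻¹ * f x) + ENNReal.ofReal b * (∫⁻ y, G⁻¹ * g y) :=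
        geom_mean_le_arith_mean_ennreal ha hb hab _ _
    _ ≤ ∫⁻ z, C * h z :=
        add_lintegral_le_lintegral_of_iSup_eq_one ha hb hab (hf.const_mul _) (hg.const_mul _)
          (hh.const_mul _) (hsup hF hf_top) (hsup hG hg_top) fun x y => by
            rw [normalize]
            exact mul_le_mul_right (hfgh x y) C
    _ = C * ∫⁻ z, h z := lintegral_const_mul _ hh

lemma prekopa_leindler_real {a b : ℝ} (ha : 0 < a) (hb : 0 < b)
    (hab : a + b = 1) {f g h : ℝ → ℝ≥0∞} (hf : Measurable f) (hg : Measurable g)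
    (hh : Measurable h) (hfgh : ∀ x y, f x ^ a * g y ^ b ≤ h (a * x + b * y)) :
    (∫⁻ x, f x) ^ a * (∫⁻ y, g y) ^ b ≤ ∫⁻ z, h z := by
  rcases eq_or_ne (∫⁻ x, f x) 0 with hf₀ | hf₀
  · simp [hf₀, ha]
  rcases eq_or_ne (∫⁻ y, g y) 0 with hg₀ | hg₀
  · simp [hg₀, hb]
  have truncate {k : ℝ → ℝ≥0∞} (hk : Measurable k) :
      Tendsto (fun n : ℕ => ∫⁻ x, min (k x) n) atTop (𝓝 (∫⁻ x, k x)) := by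
    refine lintegral_tendsto_of_tendsto_of_monotone
      (fun n => (hk.min measurable_const).aemeasurable)
      (ae_of_all _ fun x m n hmn => min_le_min le_rfl (Nat.cast_le.2 hmn))
      (ae_of_all _ fun x => ?_)
    simpa using tendsto_const_nhds.min ENNReal.tendsto_nat_nhds_top
  have truncate_bdd (k : ℝ → ℝ≥0∞) (n : ℕ) : ⨆ x, min (k x) n ≠ ∞ :=
    ((iSup_le fun x => min_le_right _ _).trans_lt (ENNReal.natCast_lt_top n)).ne
  have truncate_rpow {k : ℝ → ℝ≥0∞} (hk : Measurable k) (c : ℝ) :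
      Tendsto (fun n : ℕ => (∫⁻ x, min (k x) n) ^ c) atTop (𝓝 ((∫⁻ x, k x) ^ c)) :=
    (ENNReal.continuous_rpow_const.tendsto _).comp (truncate hk)
  refine le_of_tendsto' (ENNReal.Tendsto.mul (truncate_rpow hf a)
    (Or.inl (by simp [hf₀, ha.not_gt])) (truncate_rpow hg b)
    (Or.inl (by simp [hg₀, hb.not_gt]))) fun n => ?_
  refine prekopa_leindler_real_of_iSup_ne_top ha hb hab (hf.min measurable_const)
    (hg.min measurable_const) hh (truncate_bdd f n) (truncate_bdd g n) fun x y => ?_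
  refine le_trans ?_ (hfgh x y)
  gcongr <;> exact min_le_left _ _

lemma measurable_fin_cons {n : ℕ} :
    Measurable fun q : ℝ × (Fin n → ℝ) => (Fin.cons q.1 q.2 : Fin (n + 1) → ℝ) :=
  measurable_pi_iff.2 <| Fin.cases measurable_fst fun i =>
    (measurable_pi_apply i).comp measurable_snd

lemma lintegral_fin_succ_eq_lintegral_lintegral_cons {n : ℕ} {f : (Fin (n + 1) → ℝ) → ℝ≥0∞}
    (hf : Measurable f) : ∫⁻ x, f x = ∫⁻ s, ∫⁻ y : Fin n → ℝ, f (Fin.cons s y) := by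
  have hsymm (q : ℝ × (Fin n → ℝ)) :
      (MeasurableEquiv.piFinSuccAbove (fun _ : Fin (n + 1) => ℝ) 0).symm q = Fin.cons q.1 q.2 :=
    Fin.insertNth_zero' q.1 q.2
  rw [← ((volume_preserving_piFinSuccAbove (fun _ : Fin (n + 1) => ℝ) 0).symm).lintegral_comp hf]
  simp only [hsymm]
  exact lintegral_prod _ (hf.comp measurable_fin_cons).aemeasurable

theorem prekopa_leindler {a b : ℝ} (ha : 0 < a) (hb : 0 < b) (hab : a + b = 1) :
    ∀ {n : ℕ} {f g h : (Fin n → ℝ) → ℝ≥0∞}, Measurable f → Measurable g → Measurable h →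
      (∀ x y, f x ^ a * g y ^ b ≤ h (a • x + b • y)) →
      (∫⁻ x, f x) ^ a * (∫⁻ y, g y) ^ b ≤ ∫⁻ z, h z := by
  intro n
  induction n with
  | zero =>
    intro f g h _ _ _ hfgh
    simpa only [Measure.volume_pi_eq_dirac (0 : Fin 0 → ℝ), lintegral_dirac,
      Subsingleton.elim _ (0 : Fin 0 → ℝ)]
      using hfgh 0 0
  | succ n ih =>
    intro f g h hf hg hh hfgh
    have hsection {k : (Fin (n + 1) → ℝ) → ℝ≥0∞} (hk : Measurable k) (s : ℝ) :
        Measurable fun y : Fin n → ℝ => k (Fin.cons s y) :=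
      hk.comp (measurable_fin_cons.comp measurable_prodMk_left)
    have hmarginal {k : (Fin (n + 1) → ℝ) → ℝ≥0∞} (hk : Measurable k) :
        Measurable fun s => ∫⁻ y : Fin n → ℝ, k (Fin.cons s y) :=
      (hk.comp measurable_fin_cons).lintegral_prod_right'
    simp only [lintegral_fin_succ_eq_lintegral_lintegral_cons, hf, hg, hh]
    refine prekopa_leindler_real ha hb hab (hmarginal hf) (hmarginal hg) (hmarginal hh)
      fun s t => ih (hsection hf s) (hsection hg t) (hsection hh _) fun x y => ?_
    convert hfgh (Fin.cons s x) (Fin.cons t y) using 2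
    ext i
    refine Fin.cases ?_ (fun j => ?_) i <;> simp

end PrekopaLeindler

section BrunnMinkowski

variable {n : ℕ} {A B : Set (EuclideanSpace ℝ (Fin n))}

lemma volume_rpow_mul_volume_rpow_le {a b : ℝ} (ha : 0 < a) (hb : 0 < b) (hab : a + b = 1)
    (hA : MeasurableSet A) (hB : MeasurableSet B) :
    volume A ^ a * volume B ^ b ≤ volume (a • A + b • B) := by
  set C := toMeasurable volume (a • A + b • B)
  have htoLp : Measurable (WithLp.toLp 2 : (Fin n → ℝ) → EuclideanSpace ℝ (Fin n)) :=
    (PiLp.volume_preserving_toLp (Fin n)).measurable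
  have hind {S : Set (EuclideanSpace ℝ (Fin n))} (hS : MeasurableSet S) :
      ∫⁻ x : Fin n → ℝ, S.indicator 1 (WithLp.toLp 2 x) = volume S := by
    rw [(PiLp.volume_preserving_toLp (Fin n)).lintegral_comp (measurable_one.indicator hS),
      lintegral_indicator_one hS]
  have hC : MeasurableSet C := measurableSet_toMeasurable _ _
  rw [← measure_toMeasurable (a • A + b • B), ← hind hA, ← hind hB, ← hind hC]
  refine prekopa_leindler ha hb hab ((measurable_one.indicator hA).comp htoLp)
    ((measurable_one.indicator hB).comp htoLp) ((measurable_one.indicator hC).comp htoLp)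
    fun x y => ?_
  by_cases hx : WithLp.toLp 2 x ∈ A
  · by_cases hy : WithLp.toLp 2 y ∈ B
    · have hz : a • WithLp.toLp 2 x + b • WithLp.toLp 2 y ∈ C := subset_toMeasurable _ _
        (add_mem_add (smul_mem_smul_set hx) (smul_mem_smul_set hy))
      simp [hx, hy, hz]
    · simp [hy, hb]
  · simp [hx, ha]

lemma volume_le_volume_add (A : Set (EuclideanSpace ℝ (Fin n))) (hB : B.Nonempty) :
    volume A ≤ volume (A + B) := by
  obtain ⟨b, hb⟩ := hB
  rw [← measure_vadd volume b A]
  exact measure_mono fun _ ⟨x, hx, hxb⟩ => ⟨x, hx, b, hb, (add_comm x b).trans hxb⟩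

lemma volume_inv_smul {r : ℝ} (hr : 0 < r) (A : Set (EuclideanSpace ℝ (Fin n))) :
    volume (r⁻¹ • A) = volume A / ENNReal.ofReal r ^ n := by
  rw [Measure.addHaar_smul_of_nonneg _ (inv_pos.2 hr).le, finrank_euclideanSpace_fin, inv_pow,
    ENNReal.ofReal_inv_of_pos (pow_pos hr n), ENNReal.ofReal_pow hr.le, mul_comm, div_eq_mul_inv]

theorem brunn_minkowski [NeZero n] (hA : MeasurableSet A) (hB : MeasurableSet B)
    (hA₀ : A.Nonempty) (hB₀ : B.Nonempty) :
    volume A ^ (n : ℝ)⁻¹ + volume B ^ (n : ℝ)⁻¹ ≤ volume (A + B) ^ (n : ℝ)⁻¹ := by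
  have hn : 0 < (n : ℝ)⁻¹ := inv_pos.2 (Nat.cast_pos.2 (NeZero.pos n))
  have hAle : volume A ≤ volume (A + B) := volume_le_volume_add A hB₀
  have hBle : volume B ≤ volume (A + B) := add_comm B A ▸ volume_le_volume_add B hA₀
  rcases eq_or_ne (volume (A + B)) ∞ with htop | htop
  · simp [htop, hn]
  rcases eq_or_ne (volume A) 0 with hA_null | hA_null
  · simpa [hA_null, hn] using ENNReal.rpow_le_rpow hBle hn.le
  rcases eq_or_ne (volume B) 0 with hB_null | hB_null
  · simpa [hB_null, hn] using ENNReal.rpow_le_rpow hAle hn.le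
  have radius {S : Set (EuclideanSpace ℝ (Fin n))} (hS₀ : volume S ≠ 0) (hS : volume S ≠ ∞) :
      ∃ r : ℝ, 0 < r ∧ volume S ^ (n : ℝ)⁻¹ = ENNReal.ofReal r ∧ volume (r⁻¹ • S) = 1 := by
    have hroot_top : volume S ^ (n : ℝ)⁻¹ ≠ ∞ := ENNReal.rpow_ne_top_of_nonneg hn.le hS
    have hroot₀ : volume S ^ (n : ℝ)⁻¹ ≠ 0 := by simp [hS₀, hS]
    have hr : 0 < (volume S ^ (n : ℝ)⁻¹).toReal := ENNReal.toReal_pos hroot₀ hroot_top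
    refine ⟨_, hr, (ENNReal.ofReal_toReal hroot_top).symm, ?_⟩
    rw [volume_inv_smul hr, ENNReal.ofReal_toReal hroot_top,
      ENNReal.rpow_inv_natCast_pow (NeZero.ne n), ENNReal.div_self hS₀ hS]
  obtain ⟨α, hα, hAα, hA₁⟩ := radius hA_null (hAle.trans_lt htop.lt_top).ne
  obtain ⟨β, hβ, hBβ, hB₁⟩ := radius hB_null (hBle.trans_lt htop.lt_top).ne
  have hαβ : 0 < α + β := add_pos hα hβ
  have hsum : (α / (α + β)) • α⁻¹ • A + (β / (α + β)) • β⁻¹ • B = (α + β)⁻¹ • (A + B) := by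
    rw [smul_smul, smul_smul, smul_add]
    congr 3 <;> field_simp
  have hone : 1 ≤ volume ((α + β)⁻¹ • (A + B)) := by
    have := volume_rpow_mul_volume_rpow_le (div_pos hα hαβ) (div_pos hβ hαβ)
      (by rw [← add_div, div_self hαβ.ne']) (hA.const_smul_of_ne_zero (inv_ne_zero hα.ne'))
      (hB.const_smul_of_ne_zero (inv_ne_zero hβ.ne'))
    rwa [hsum, hA₁, hB₁, ENNReal.one_rpow, ENNReal.one_rpow, one_mul] at this
  rw [volume_inv_smul hαβ, ENNReal.le_div_iff_mul_le (Or.inl (by simp [hαβ.not_ge]))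
    (Or.inl (by simp)), one_mul, ← ENNReal.rpow_natCast] at hone
  rw [hAα, hBβ, ← ENNReal.ofReal_add hα.le hβ.le]
  exact (ENNReal.le_rpow_inv_iff (by simpa using hn)).2 hone

end BrunnMinkowski

section Sobolev

/-- The constant `n |B₁|^{1/n}` of the isoperimetric inequality `P(A) ≥ n |B₁|^{1/n} |A|^{1 - 1/n}`
in `ℝⁿ`, which is an equality for balls. -/
noncomputable def isoperimetricConst (n : ℕ) : ℝ≥0∞ :=
  n * volume (Metric.ball (0 : EuclideanSpace ℝ (Fin n)) 1) ^ (n : ℝ)⁻¹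

variable {n : ℕ} {p : ℝ}

lemma volume_add_mul_rpow_le_volume_add_ball (hp : (n : ℝ).HolderConjugate p)
    {A : Set (EuclideanSpace ℝ (Fin n))} (hA : MeasurableSet A) {r : ℝ} (hr : 0 < r) :
    volume A + ENNReal.ofReal r * (isoperimetricConst n * volume A ^ p⁻¹) ≤
      volume (A + Metric.ball 0 r) := by
  have hn : n ≠ 0 := by exact_mod_cast hp.ne_zero
  have : NeZero n := ⟨hn⟩
  have : Nonempty (Fin n) := ⟨0⟩
  rcases A.eq_empty_or_nonempty with rfl | hA₀
  · simp [hp.symm.pos]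
  set a := volume A ^ (n : ℝ)⁻¹ with ha
  set b := volume (Metric.ball (0 : EuclideanSpace ℝ (Fin n)) r) ^ (n : ℝ)⁻¹ with hb
  have hpow : a ^ n = volume A := ENNReal.rpow_inv_natCast_pow hn _
  have hpow_pred : a ^ (n - 1) = volume A ^ p⁻¹ := by
    rw [ha, ← ENNReal.rpow_natCast, ← ENNReal.rpow_mul, ← hp.one_sub_inv,
      Nat.cast_pred (NeZero.pos n), mul_sub, mul_one, inv_mul_cancel₀ hp.ne_zero]
  have hball : n * b = ENNReal.ofReal r * isoperimetricConst n := by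
    rw [hb, isoperimetricConst, Measure.addHaar_ball volume 0 hr.le, finrank_euclideanSpace_fin,
      ENNReal.mul_rpow_of_nonneg _ _ hp.inv_nonneg, ENNReal.ofReal_pow hr.le,
      ENNReal.pow_rpow_inv_natCast hn, mul_left_comm]
  calc volume A + ENNReal.ofReal r * (isoperimetricConst n * volume A ^ p⁻¹)
      = a ^ n + n * a ^ (n - 1) * b := by
        rw [← mul_assoc, ← hball, hpow, hpow_pred, mul_right_comm]
    _ ≤ (a + b) ^ n := pow_add_mul_le_add_pow_of_sq_nonneg zero_le zero_le zero_le zero_le n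
    _ ≤ (volume (A + Metric.ball 0 r) ^ (n : ℝ)⁻¹) ^ n :=
        pow_le_pow_left₀ zero_le
          (brunn_minkowski hA measurableSet_ball hA₀ ⟨0, Metric.mem_ball_self hr⟩) n
    _ = volume (A + Metric.ball 0 r) := ENNReal.rpow_inv_natCast_pow hn _

lemma lintegral_rpow_rpow_inv_le_lintegral_meas_lt_rpow {α : Type*} [MeasurableSpace α]
    {μ : Measure α} {q : ℝ} (hpq : p.HolderConjugate q) {f : α → ℝ} (hf : Measurable f)
    (hf₀ : 0 ≤ f) (hfin : ∫⁻ x, ENNReal.ofReal (f x) ^ q ∂μ ≠ ∞) :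
    (∫⁻ x, ENNReal.ofReal (f x) ^ q ∂μ) ^ q⁻¹ ≤ ∫⁻ t in Ioi 0, μ {x | t < f x} ^ q⁻¹ := by
  set I := ∫⁻ x, ENNReal.ofReal (f x) ^ q ∂μ with hI
  set w : α → ℝ≥0∞ := fun x => ENNReal.ofReal (f x) ^ (q - 1) with hw
  have hw_meas : Measurable w := hf.ennreal_ofReal.pow_const _
  have hlevel (t : ℝ) : μ.withDensity w {x | t < f x} ≤ μ {x | t < f x} ^ q⁻¹ * I ^ p⁻¹ := by
    have hlt : MeasurableSet {x | t < f x} := measurableSet_lt measurable_const hf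
    calc μ.withDensity w {x | t < f x}
        = ∫⁻ x in {x | t < f x}, (1 * w) x ∂μ := by rw [withDensity_apply _ hlt, one_mul]
      _ ≤ (∫⁻ x in {x | t < f x}, 1 ^ q ∂μ) ^ (1 / q) *
            (∫⁻ x in {x | t < f x}, w x ^ p ∂μ) ^ (1 / p) :=
          ENNReal.lintegral_mul_le_Lp_mul_Lq _ hpq.symm aemeasurable_const hw_meas.aemeasurable
      _ ≤ μ {x | t < f x} ^ q⁻¹ * I ^ p⁻¹ := by
          simp only [ENNReal.one_rpow, setLIntegral_one, one_div, hw, ← ENNReal.rpow_mul,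
            hpq.symm.sub_one_mul_conj]
          gcongr
          · exact hpq.inv_nonneg
          · exact setLIntegral_le_lintegral _ _
  have hcake : I = ∫⁻ t in Ioi 0, μ.withDensity w {x | t < f x} := by
    rw [← lintegral_eq_lintegral_meas_lt _ (.of_forall hf₀) hf.aemeasurable,
      lintegral_withDensity_eq_lintegral_mul _ hw_meas hf.ennreal_ofReal, hI]
    refine lintegral_congr fun x => ?_
    calc ENNReal.ofReal (f x) ^ q = ENNReal.ofReal (f x) ^ (q - 1 + 1) := by rw [sub_add_cancel]
      _ = w x * ENNReal.ofReal (f x) := by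
        rw [ENNReal.rpow_add_of_nonneg _ _ hpq.symm.sub_one_pos.le zero_le_one, ENNReal.rpow_one]
  rcases eq_or_ne I 0 with hI₀ | hI₀
  · simp [hI₀, hpq.symm.pos]
  have hIp₀ : I ^ p⁻¹ ≠ 0 := by simp [hI₀, hfin]
  have hIp : I ^ p⁻¹ ≠ ∞ := ENNReal.rpow_ne_top_of_nonneg hpq.inv_nonneg hfin
  refine (ENNReal.mul_le_mul_iff_left hIp₀ hIp).1 ?_
  calc I ^ q⁻¹ * I ^ p⁻¹ = I := by
        rw [← ENNReal.rpow_add _ _ hI₀ hfin, hpq.symm.inv_add_inv_eq_one, ENNReal.rpow_one]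
    _ ≤ ∫⁻ t in Ioi 0, μ {x | t < f x} ^ q⁻¹ * I ^ p⁻¹ :=
        hcake.trans_le (lintegral_mono hlevel)
    _ = (∫⁻ t in Ioi 0, μ {x | t < f x} ^ q⁻¹) * I ^ p⁻¹ := lintegral_mul_const' _ _ hIp

lemma superlevel_add_ball_subset {E : Type*} [NormedAddCommGroup E] [NormedSpace ℝ E] {f : E → ℝ}
    (hf : Differentiable ℝ f) {r η : ℝ} (hr : r ≤ 1)
    (hη : ∀ x y, dist x y < r → dist (fderiv ℝ f x) (fderiv ℝ f y) ≤ η) {t : ℝ} (ht : 0 ≤ t) :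
    {x | t < |f x|} + Metric.ball 0 r ⊆ {y | t < |f y| + r * (‖fderiv ℝ f y‖ +
      (Metric.cthickening 1 (tsupport f)).indicator (fun _ => η) y)} := by
  rintro _ ⟨x, hx, v, hv, rfl⟩
  have hx : t < |f x| := hx
  have hr₀ : 0 < r := Metric.pos_of_mem_ball hv
  have hdist : dist x (x + v) < r := by simpa using hv
  have hfx : f x ≠ 0 := abs_pos.1 (ht.trans_lt hx)
  have hmem : x + v ∈ Metric.cthickening 1 (tsupport f) :=
    Metric.mem_cthickening_of_dist_le _ x _ _ (subset_tsupport f hfx)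
      (by rw [dist_comm]; exact (hdist.trans_le hr).le)
  have hbound : ∀ z ∈ Metric.ball (x + v) r, ‖fderiv ℝ f z‖ ≤ ‖fderiv ℝ f (x + v)‖ + η :=
    fun z hz => (norm_le_norm_add_norm_sub' _ _).trans
      (add_le_add_right ((dist_eq_norm _ _).symm.trans_le (hη z _ hz)) _)
  have hmean : |f x - f (x + v)| ≤ (‖fderiv ℝ f (x + v)‖ + η) * ‖x - (x + v)‖ :=
    (convex_ball (x + v) r).norm_image_sub_le_of_norm_fderiv_le (fun z _ => hf z) hbound
      (Metric.mem_ball_self hr₀) hdist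
  have hη₀ : 0 ≤ ‖fderiv ℝ f (x + v)‖ + η :=
    (norm_nonneg _).trans (hbound _ (Metric.mem_ball_self hr₀))
  simp only [mem_ofPred_eq, indicator_of_mem hmem]
  calc t < |f x| := hx
    _ ≤ |f (x + v)| + |f x - f (x + v)| := by
        linarith [abs_sub_abs_le_abs_sub (f x) (f (x + v))]
    _ ≤ |f (x + v)| + (‖fderiv ℝ f (x + v)‖ + η) * r := by
        rw [← dist_eq_norm] at hmean
        gcongr
        exact hmean.trans (by gcongr)
    _ = _ := by ring

variable {f : EuclideanSpace ℝ (Fin n) → ℝ}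

lemma lintegral_ofReal_abs_add_mul_norm_fderiv_add (hf : ContDiff ℝ 1 f)
    {K : Set (EuclideanSpace ℝ (Fin n))} (hK : MeasurableSet K) {r η : ℝ} (hr : 0 ≤ r)
    (hη : 0 ≤ η) :
    ∫⁻ x, ENNReal.ofReal (|f x| + r * (‖fderiv ℝ f x‖ + K.indicator (fun _ => η) x)) =
      (∫⁻ x, ENNReal.ofReal |f x|) +
        ENNReal.ofReal r * ((∫⁻ x, ‖fderiv ℝ f x‖ₑ) + ENNReal.ofReal η * volume K) := by
  have hfderiv : Measurable (fderiv ℝ f) := (hf.continuous_fderiv one_ne_zero).measurable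
  have hsplit (x) : ENNReal.ofReal (|f x| + r * (‖fderiv ℝ f x‖ + K.indicator (fun _ => η) x)) =
      ENNReal.ofReal |f x| + ENNReal.ofReal r *
        (‖fderiv ℝ f x‖ₑ + K.indicator (fun _ => ENNReal.ofReal η) x) := by
    have hind : 0 ≤ K.indicator (fun _ => η) x := indicator_nonneg (fun _ _ => hη) x
    rw [ENNReal.ofReal_add (abs_nonneg _) (by positivity), ENNReal.ofReal_mul hr,
      ENNReal.ofReal_add (norm_nonneg _) hind, ofReal_norm]
    by_cases hx : x ∈ K <;> simp [hx]
  simp only [hsplit]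
  rw [lintegral_add_left hf.continuous.measurable.abs.ennreal_ofReal,
    lintegral_const_mul' _ _ ENNReal.ofReal_ne_top, lintegral_add_left hfderiv.enorm,
    lintegral_indicator_const hK]

-- Brunn–Minkowski for the `r`-neighbourhoods of the superlevel sets, integrated over the levels,
-- takes the place of the coarea formula.
lemma isoperimetricConst_mul_lintegral_meas_lt_rpow_le_add (hp : (n : ℝ).HolderConjugate p)
    (hf : ContDiff ℝ 1 f) (hf_supp : HasCompactSupport f) {r η : ℝ} (hr₀ : 0 < r) (hr₁ : r ≤ 1)
    (hη₀ : 0 ≤ η) (hη : ∀ x y, dist x y < r → dist (fderiv ℝ f x) (fderiv ℝ f y) ≤ η) :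
    isoperimetricConst n * ∫⁻ t in Ioi 0, volume {x | t < |f x|} ^ p⁻¹ ≤
      (∫⁻ x, ‖fderiv ℝ f x‖ₑ) +
        ENNReal.ofReal η * volume (Metric.cthickening 1 (tsupport f)) := by
  set K := Metric.cthickening 1 (tsupport f)
  have hK : MeasurableSet K := Metric.isClosed_cthickening.measurableSet
  have habs : Measurable fun x => |f x| := hf.continuous.measurable.abs
  have hfin : ∫⁻ x, ENNReal.ofReal |f x| ≠ ∞ := by
    simpa only [← Real.enorm_eq_ofReal_abs] using
      (hf.continuous.integrable_of_hasCompactSupport hf_supp).2.ne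
  set G := fun y => |f y| + r * (‖fderiv ℝ f y‖ + K.indicator (fun _ => η) y)
  have hG₀ (y) : 0 ≤ G y := by
    have : 0 ≤ K.indicator (fun _ => η) y := indicator_nonneg (fun _ _ => hη₀) y
    positivity
  have hG : Measurable G := habs.add
    (((hf.continuous_fderiv one_ne_zero).measurable.norm.add
      (measurable_const.indicator hK)).const_mul r)
  have hanti : Measurable fun t : ℝ => volume {x | t < |f x|} :=
    Antitone.measurable fun s t hst => measure_mono fun x hx => hst.trans_lt hx
  have hlevel {t : ℝ} (ht : t ∈ Ioi 0) : volume {x | t < |f x|} +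
      ENNReal.ofReal r * (isoperimetricConst n * volume {x | t < |f x|} ^ p⁻¹) ≤
        volume {x | t < G x} :=
    (volume_add_mul_rpow_le_volume_add_ball hp (measurableSet_lt measurable_const habs) hr₀).trans
      (measure_mono (superlevel_add_ball_subset (hf.differentiable one_ne_zero) hr₁ hη
        (mem_Ioi.1 ht).le))
  have hintegrated := setLIntegral_mono' (μ := volume) measurableSet_Ioi @hlevel
  rw [lintegral_add_left hanti, lintegral_const_mul _ ((hanti.pow_const _).const_mul _),
    lintegral_const_mul _ (hanti.pow_const _),
    ← lintegral_eq_lintegral_meas_lt _ (.of_forall fun x => abs_nonneg (f x)) habs.aemeasurable,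
    ← lintegral_eq_lintegral_meas_lt _ (.of_forall hG₀) hG.aemeasurable,
    lintegral_ofReal_abs_add_mul_norm_fderiv_add hf hK hr₀.le hη₀] at hintegrated
  exact (ENNReal.mul_le_mul_iff_right (by simpa using hr₀) ENNReal.ofReal_ne_top).1
    ((ENNReal.add_le_add_iff_left hfin).1 hintegrated)

lemma isoperimetricConst_mul_lintegral_meas_lt_rpow_le (hp : (n : ℝ).HolderConjugate p)
    (hf : ContDiff ℝ 1 f) (hf_supp : HasCompactSupport f) :
    isoperimetricConst n * ∫⁻ t in Ioi 0, volume {x | t < |f x|} ^ p⁻¹ ≤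
      ∫⁻ x, ‖fderiv ℝ f x‖ₑ := by
  have hunif : UniformContinuous (fderiv ℝ f) :=
    (hf_supp.fderiv ℝ).uniformContinuous_of_continuous (hf.continuous_fderiv one_ne_zero)
  have hbound {η : ℝ} (hη : 0 < η) :
      isoperimetricConst n * ∫⁻ t in Ioi 0, volume {x | t < |f x|} ^ p⁻¹ ≤
        (∫⁻ x, ‖fderiv ℝ f x‖ₑ) +
          ENNReal.ofReal η * volume (Metric.cthickening 1 (tsupport f)) := by
    obtain ⟨r, hr, hrη⟩ := Metric.uniformContinuous_iff.1 hunif η hη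
    exact isoperimetricConst_mul_lintegral_meas_lt_rpow_le_add hp hf hf_supp
      (lt_min hr one_pos) (min_le_right r 1) hη.le
      fun x y hxy => (hrη (hxy.trans_le (min_le_left r 1))).le
  have hlim : Tendsto (fun η : ℝ => (∫⁻ x, ‖fderiv ℝ f x‖ₑ) +
      ENNReal.ofReal η * volume (Metric.cthickening 1 (tsupport f))) (𝓝[>] 0)
      (𝓝 ((∫⁻ x, ‖fderiv ℝ f x‖ₑ) +
        ENNReal.ofReal 0 * volume (Metric.cthickening 1 (tsupport f)))) :=
    (ENNReal.Tendsto.mul_const ENNReal.continuous_ofReal.continuousWithinAt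
      (Or.inr hf_supp.isCompact.cthickening.measure_lt_top.ne)).const_add _
  simpa using ge_of_tendsto hlim (eventually_mem_nhdsWithin.mono fun η hη => hbound hη)

theorem isoperimetricConst_mul_lintegral_rpow_le_lintegral_enorm_fderiv
    (hp : (n : ℝ).HolderConjugate p) (hf : ContDiff ℝ 1 f) (hf_supp : HasCompactSupport f) :
    isoperimetricConst n * (∫⁻ x, ‖f x‖ₑ ^ p) ^ p⁻¹ ≤ ∫⁻ x, ‖fderiv ℝ f x‖ₑ := by
  have hfin : ∫⁻ x, ‖f x‖ₑ ^ p ≠ ∞ := by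
    have hmem : MemLp f (ENNReal.ofReal p) := hf.continuous.memLp_of_hasCompactSupport hf_supp
    simpa [ENNReal.toReal_ofReal hp.symm.nonneg] using
      (lintegral_rpow_enorm_lt_top_of_eLpNorm_lt_top
        (by simpa using hp.symm.pos) ENNReal.ofReal_ne_top hmem.2).ne
  refine (mul_le_mul_right ?_ _).trans (isoperimetricConst_mul_lintegral_meas_lt_rpow_le hp hf
    hf_supp)
  simp only [Real.enorm_eq_ofReal_abs] at hfin ⊢
  exact lintegral_rpow_rpow_inv_le_lintegral_meas_lt_rpow hp hf.continuous.measurable.abs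
    (fun _ => abs_nonneg _) hfin

end Sobolev

section BoundedVariation

open scoped ContDiff Convolution

/-- The distributional gradient of `w` is a vector measure whose total variation is at most `ν`:
every directional derivative `∂_v w`, tested against a smooth compactly supported `φ`, is bounded
by `‖v‖ ∫ |φ| dν`. -/
def VariationLE {E : Type*} [NormedAddCommGroup E] [NormedSpace ℝ E] [MeasureSpace E]
    (w : E → ℝ) (ν : Measure E) : Prop :=
  ∀ φ : E → ℝ, ContDiff ℝ ∞ φ → HasCompactSupport φ → ∀ v : E,
    |∫ x, w x * fderiv ℝ φ x v| ≤ ‖v‖ * ∫ x, |φ x| ∂ν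

section Mollification

variable {E : Type*} [NormedAddCommGroup E] [NormedSpace ℝ E] [FiniteDimensional ℝ E]
  [MeasureSpace E] [BorelSpace E] [(volume : Measure E).IsAddHaarMeasure]
  {w ρ : E → ℝ} {ν : Measure E}

lemma fderiv_convolution_flip_lsmul_apply (hw : LocallyIntegrable w) (hρ : ContDiff ℝ ∞ ρ)
    (hρ_supp : HasCompactSupport ρ) (x v : E) :
    fderiv ℝ (w ⋆[(ContinuousLinearMap.lsmul ℝ ℝ).flip] ρ) x v =
      ∫ y, w y * fderiv ℝ ρ (x - y) v := by
  have hρ₁ : ContDiff ℝ 1 ρ := hρ.of_le (by exact_mod_cast le_top)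
  rw [(hρ_supp.hasFDerivAt_convolution_right _ hw hρ₁ x).fderiv, convolution_precompR_apply _ hw
    (hρ_supp.fderiv ℝ) (hρ₁.continuous_fderiv one_ne_zero)]
  simp only [convolution_def, ContinuousLinearMap.flip_apply, ContinuousLinearMap.lsmul_apply,
    smul_eq_mul, mul_comm]

lemma VariationLE.enorm_fderiv_convolution_le [IsFiniteMeasure ν] (hwν : VariationLE w ν)
    (hw : LocallyIntegrable w) (hρ : ContDiff ℝ ∞ ρ) (hρ_supp : HasCompactSupport ρ) (x : E) :
    ‖fderiv ℝ (w ⋆[(ContinuousLinearMap.lsmul ℝ ℝ).flip] ρ) x‖ₑ ≤ ∫⁻ y, ‖ρ (x - y)‖ₑ ∂ν := by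
  have hsub : ContDiff ℝ ∞ fun y => ρ (x - y) := hρ.comp (contDiff_const.sub contDiff_id)
  have hsub_supp : HasCompactSupport fun y => ρ (x - y) :=
    hρ_supp.comp_homeomorph (Homeomorph.subLeft x)
  have hderiv (y v : E) : fderiv ℝ (fun y => ρ (x - y)) y v = -fderiv ℝ ρ (x - y) v := by
    have := ((hρ.differentiable (by simp) (x - y)).hasFDerivAt.comp y
      ((hasFDerivAt_id y).const_sub x)).fderiv
    simpa [Function.comp_def] using congr($this v)
  have hnorm : ‖fderiv ℝ (w ⋆[(ContinuousLinearMap.lsmul ℝ ℝ).flip] ρ) x‖ ≤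
      ∫ y, |ρ (x - y)| ∂ν := by
    refine ContinuousLinearMap.opNorm_le_bound _ (integral_nonneg fun _ => abs_nonneg _) fun v => ?_
    have := hwν _ hsub hsub_supp v
    rw [fderiv_convolution_flip_lsmul_apply hw hρ hρ_supp, Real.norm_eq_abs, mul_comm _ ‖v‖]
    simpa only [hderiv, mul_neg, integral_neg, abs_neg] using this
  calc ‖fderiv ℝ (w ⋆[(ContinuousLinearMap.lsmul ℝ ℝ).flip] ρ) x‖ₑ
      ≤ ENNReal.ofReal (∫ y, |ρ (x - y)| ∂ν) := by
        rw [← ofReal_norm]; exact ENNReal.ofReal_le_ofReal hnorm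
    _ = ∫⁻ y, ‖ρ (x - y)‖ₑ ∂ν := by
        simpa using (ofReal_integral_norm_eq_lintegral_enorm
          (hsub.continuous.integrable_of_hasCompactSupport hsub_supp))

lemma VariationLE.lintegral_enorm_fderiv_convolution_le [IsFiniteMeasure ν]
    (hwν : VariationLE w ν) (hw : LocallyIntegrable w) (hρ : ContDiff ℝ ∞ ρ)
    (hρ_supp : HasCompactSupport ρ) :
    ∫⁻ x, ‖fderiv ℝ (w ⋆[(ContinuousLinearMap.lsmul ℝ ℝ).flip] ρ) x‖ₑ ≤
      (∫⁻ x, ‖ρ x‖ₑ) * ν univ :=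
  calc ∫⁻ x, ‖fderiv ℝ (w ⋆[(ContinuousLinearMap.lsmul ℝ ℝ).flip] ρ) x‖ₑ
      ≤ ∫⁻ x, ∫⁻ y, ‖ρ (x - y)‖ₑ ∂ν :=
        lintegral_mono (hwν.enorm_fderiv_convolution_le hw hρ hρ_supp)
    _ = ∫⁻ y, (∫⁻ x, ‖ρ (x - y)‖ₑ) ∂ν := lintegral_lintegral_swap
        (hρ.continuous.comp (continuous_fst.sub continuous_snd)).measurable.enorm.aemeasurable
    _ = (∫⁻ x, ‖ρ x‖ₑ) * ν univ := by
        simp only [lintegral_sub_right_eq_self fun x => ‖ρ x‖ₑ, lintegral_const]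

lemma exists_contDiffBump_tendsto (hw : LocallyIntegrable w) :
    ∃ ρ : ℕ → ContDiffBump (0 : E), ∀ᵐ x, Tendsto
      (fun k => (w ⋆[(ContinuousLinearMap.lsmul ℝ ℝ).flip] (ρ k).normed volume) x)
      atTop (𝓝 (w x)) := by
  let ρ (k : ℕ) : ContDiffBump (0 : E) :=
    ⟨1 / ((k : ℝ) + 1), 2 * (1 / ((k : ℝ) + 1)), by positivity, by
      linarith [show 0 < 1 / ((k : ℝ) + 1) by positivity]⟩
  refine ⟨ρ, ?_⟩
  simp only [convolution_flip]
  refine ContDiffBump.ae_convolution_tendsto_right_of_locallyIntegrable (K := 2) ?_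
    (.of_forall fun _ => le_rfl) hw
  simpa only [mul_zero] using tendsto_one_div_add_atTop_nhds_zero_nat.const_mul (2 : ℝ)

end Mollification

variable {n : ℕ} {p : ℝ} {w : EuclideanSpace ℝ (Fin n) → ℝ}
  {ν : Measure (EuclideanSpace ℝ (Fin n))}

theorem VariationLE.isoperimetricConst_mul_lintegral_rpow_le [IsFiniteMeasure ν]
    (hwν : VariationLE w ν) (hp : (n : ℝ).HolderConjugate p) (hw : Integrable w)
    (hw_supp : HasCompactSupport w) :
    isoperimetricConst n * (∫⁻ x, ‖w x‖ₑ ^ p) ^ p⁻¹ ≤ ν univ := by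
  obtain ⟨ρ, hρw⟩ := exists_contDiffBump_tendsto hw.locallyIntegrable
  set g : ℕ → EuclideanSpace ℝ (Fin n) → ℝ := fun k =>
    w ⋆[(ContinuousLinearMap.lsmul ℝ ℝ).flip] (ρ k).normed volume
  have hρ_smooth (k) : ContDiff ℝ ∞ ((ρ k).normed volume) := (ρ k).contDiff_normed
  have hρ_supp (k) : HasCompactSupport ((ρ k).normed volume) := (ρ k).hasCompactSupport_normed
  have hg_smooth (k) : ContDiff ℝ 1 (g k) := (hρ_supp k).contDiff_convolution_right _
    hw.locallyIntegrable ((hρ_smooth k).of_le (by exact_mod_cast le_top))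
  have hρ_mass (k) : ∫⁻ x, ‖(ρ k).normed volume x‖ₑ = 1 := by
    rw [← ofReal_integral_norm_eq_lintegral_enorm (ρ k).integrable_normed]
    simp only [Real.norm_of_nonneg ((ρ k).nonneg_normed _), (ρ k).integral_normed,
      ENNReal.ofReal_one]
  have hsobolev (k) : isoperimetricConst n * (∫⁻ x, ‖g k x‖ₑ ^ p) ^ p⁻¹ ≤ ν univ :=
    (isoperimetricConst_mul_lintegral_rpow_le_lintegral_enorm_fderiv hp (hg_smooth k)
      (hw_supp.convolution _ (hρ_supp k))).trans <| by
      simpa only [hρ_mass, one_mul] using hwν.lintegral_enorm_fderiv_convolution_le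
        hw.locallyIntegrable (hρ_smooth k) (hρ_supp k)
  have heLpNorm (f : EuclideanSpace ℝ (Fin n) → ℝ) :
      (∫⁻ x, ‖f x‖ₑ ^ p) ^ p⁻¹ = eLpNorm f (ENNReal.ofReal p) := by
    rw [eLpNorm_eq_lintegral_rpow_enorm_toReal (by simpa using hp.symm.pos) ENNReal.ofReal_ne_top,
      ENNReal.toReal_ofReal hp.symm.nonneg, one_div]
  simp only [heLpNorm] at hsobolev ⊢
  rcases eq_or_ne (isoperimetricConst n) 0 with hc | hc
  · simp [hc]
  rw [mul_comm, ← ENNReal.le_div_iff_mul_le (Or.inl hc) (Or.inr (measure_ne_top ν _))]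
  refine (Lp.eLpNorm_lim_le_liminf_eLpNorm
    (fun k => (hg_smooth k).continuous.aestronglyMeasurable) w hρw).trans ?_
  refine liminf_le_of_frequently_le (.of_forall fun k => ?_)
  rw [ENNReal.le_div_iff_mul_le (Or.inl hc) (Or.inr (measure_ne_top ν _)), mul_comm]
  exact hsobolev k

end BoundedVariation

section AreaFormula

/-- Number of preimages of `y` under `f` in `s`, with value `∞` if there are infinitely many. -/
noncomputable def preimageCount {α β : Type*} [MeasurableSpace α] (f : α → β) (s : Set α) (y : β) :
    ℝ≥0∞ :=
  Measure.count (s ∩ f ⁻¹' {y})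

lemma preimageCount_toReal_mem_range_natCast {α β : Type*} [MeasurableSpace α]
    [MeasurableSingletonClass α] (f : α → β) (s : Set α) (y : β) :
    (preimageCount f s y).toReal ∈ range ((↑) : ℕ → ℝ) := by
  by_cases hfin : (s ∩ f ⁻¹' {y}).Finite
  · exact ⟨hfin.toFinset.card, by rw [preimageCount, Measure.count_apply_finite _ hfin]; simp⟩
  · exact ⟨0, by rw [preimageCount, Measure.count_apply_infinite hfin]; simp⟩

lemma preimageCount_eq_zero {α β : Type*} [MeasurableSpace α] {f : α → β} {s : Set α} {y : β}
    (hy : y ∉ f '' s) : preimageCount f s y = 0 := by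
  rw [preimageCount, (eq_empty_iff_forall_notMem.2 fun x hx => hy ⟨x, hx.1, hx.2⟩ :
    s ∩ f ⁻¹' {y} = ∅), measure_empty]

lemma preimageCount_iUnion_eq_tsum_indicator {α β : Type*} [MeasurableSpace α]
    [MeasurableSingletonClass α] {f : α → β} {t : ℕ → Set α} (ht : Pairwise (Disjoint.onFun t))
    (hinj : ∀ k, InjOn f (t k)) (y : β) :
    preimageCount f (⋃ k, t k) y = ∑' k, (f '' t k).indicator 1 y := by
  have hsub (k) : (t k ∩ f ⁻¹' {y}).Subsingleton := fun a ha b hb =>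
    hinj k ha.1 hb.1 (ha.2.trans hb.2.symm)
  rw [preimageCount, iUnion_inter, measure_iUnion
    (fun i j hij => (ht hij).mono inter_subset_left inter_subset_left)
    fun k => (hsub k).measurableSet]
  refine tsum_congr fun k => ?_
  by_cases hy : y ∈ f '' t k
  · obtain ⟨x, hx, rfl⟩ := hy
    rw [(hsub k).eq_singleton_of_mem ⟨hx, rfl⟩, Measure.count_singleton,
      indicator_of_mem (mem_image_of_mem f hx), Pi.one_apply]
  · rw [indicator_of_notMem hy]
    exact preimageCount_eq_zero hy

variable {E : Type*} [NormedAddCommGroup E] [NormedSpace ℝ E] [MeasurableSpace E] {f : E → E}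
  {f' : E → E →L[ℝ] E} {s : Set E}

/-- The number of preimages of `y` under `f` in `s`, counted with the sign of `det f'`; critical
points are not counted. For `f` the cone over a closed surface this is the winding number of the
surface around `y`. The junk value of `ENNReal.toReal` at `∞` keeps it an integer everywhere. -/
noncomputable def signedPreimageCount (f : E → E) (f' : E → E →L[ℝ] E) (s : Set E) (y : E) : ℝ :=
  (preimageCount f (s ∩ {x | 0 < (f' x).det}) y).toReal -
    (preimageCount f (s ∩ {x | (f' x).det < 0}) y).toReal

lemma signedPreimageCount_mem_range_intCast [MeasurableSingletonClass E] (y : E) :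
    signedPreimageCount f f' s y ∈ range ((↑) : ℤ → ℝ) := by
  obtain ⟨k, hk⟩ := preimageCount_toReal_mem_range_natCast f (s ∩ {x | 0 < (f' x).det}) y
  obtain ⟨l, hl⟩ := preimageCount_toReal_mem_range_natCast f (s ∩ {x | (f' x).det < 0}) y
  exact ⟨k - l, by rw [signedPreimageCount, ← hk, ← hl]; push_cast; rfl⟩

lemma signedPreimageCount_eq_zero {y : E} (hy : y ∉ f '' s) :
    signedPreimageCount f f' s y = 0 := by
  rw [signedPreimageCount, preimageCount_eq_zero fun h => hy (image_mono inter_subset_left h),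
    preimageCount_eq_zero fun h => hy (image_mono inter_subset_left h), sub_self]

variable [FiniteDimensional ℝ E] [BorelSpace E]

lemma exists_measurable_partition_injOn (hs : MeasurableSet s)
    (hf' : ∀ x ∈ s, HasFDerivWithinAt f (f' x) s x) (hdet : ∀ x ∈ s, (f' x).det ≠ 0) :
    ∃ t : ℕ → Set E, Pairwise (Disjoint.onFun t) ∧ (∀ k, MeasurableSet (t k)) ∧
      ⋃ k, t k = s ∧ ∀ k, InjOn f (t k) := by
  rcases s.eq_empty_or_nonempty with rfl | hs₀
  · exact ⟨fun _ => ∅, fun _ _ _ => disjoint_bot_left, fun _ => .empty, by simp, by simp⟩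
  have hradius (A : E →L[ℝ] E) : ∃ r : NNReal, r ≠ 0 ∧ (A.det ≠ 0 → ∀ t : Set E,
      ApproximatesLinearOn f A t r → InjOn f t) := by
    by_cases hA : A.det = 0
    · exact ⟨1, one_ne_zero, fun h => (h hA).elim⟩
    let B := A.toContinuousLinearEquivOfDetNeZero hA
    rcases subsingleton_or_nontrivial E with hE | hE
    · exact ⟨1, one_ne_zero, fun _ t _ => injOn_of_subsingleton f t⟩
    have hB : 0 < ‖(B.symm : E →L[ℝ] E)‖₊⁻¹ := inv_pos.2 B.nnnorm_symm_pos
    exact ⟨‖(B.symm : E →L[ℝ] E)‖₊⁻¹ / 2, (half_pos hB).ne', fun _ t ht =>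
      ApproximatesLinearOn.injOn (f' := B) ht (Or.inr (NNReal.half_lt_self hB.ne'))⟩
  choose r hr₀ hr using hradius
  obtain ⟨t, A, ht, ht_meas, hst, happrox, hA⟩ :=
    exists_partition_approximatesLinearOn_of_hasFDerivWithinAt f s f' hf' r hr₀
  refine ⟨fun k => s ∩ t k, fun i j hij => (ht hij).mono inter_subset_right inter_subset_right,
    fun k => hs.inter (ht_meas k), by rw [← inter_iUnion, inter_eq_left.2 hst], fun k => ?_⟩
  obtain ⟨x, hx, hAx⟩ := hA hs₀ k
  exact hr _ (hAx ▸ hdet x hx) _ (happrox k)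

variable {μ : Measure E}

lemma measurable_preimageCount (hs : MeasurableSet s)
    (hf' : ∀ x ∈ s, HasFDerivWithinAt f (f' x) s x) (hdet : ∀ x ∈ s, (f' x).det ≠ 0) :
    Measurable (preimageCount f s) := by
  obtain ⟨t, ht, ht_meas, rfl, hinj⟩ := exists_measurable_partition_injOn hs hf' hdet
  have hsub (k) : t k ⊆ ⋃ k, t k := subset_iUnion t k
  simp only [funext (preimageCount_iUnion_eq_tsum_indicator ht hinj)]
  exact .tsum fun k => measurable_one.indicator (measurable_image_of_fderivWithin
    (ht_meas k) (fun x hx => (hf' x (hsub k hx)).mono (hsub k)) (hinj k))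

theorem lintegral_abs_det_fderiv_mul_eq_lintegral_mul_preimageCount [μ.IsAddHaarMeasure]
    (hs : MeasurableSet s) (hf' : ∀ x ∈ s, HasFDerivWithinAt f (f' x) s x)
    (hdet : ∀ x ∈ s, (f' x).det ≠ 0) {g : E → ℝ≥0∞} (hg : Measurable g) :
    ∫⁻ x in s, ENNReal.ofReal |(f' x).det| * g (f x) ∂μ = ∫⁻ y, g y * preimageCount f s y ∂μ := by
  obtain ⟨t, ht, ht_meas, rfl, hinj⟩ := exists_measurable_partition_injOn hs hf' hdet
  have hsub (k) : t k ⊆ ⋃ k, t k := subset_iUnion t k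
  have ht' (k) : ∀ x ∈ t k, HasFDerivWithinAt f (f' x) (t k) x :=
    fun x hx => (hf' x (hsub k hx)).mono (hsub k)
  have himage (k) : MeasurableSet (f '' t k) :=
    measurable_image_of_fderivWithin (ht_meas k) (ht' k) (hinj k)
  calc ∫⁻ x in ⋃ k, t k, ENNReal.ofReal |(f' x).det| * g (f x) ∂μ
      = ∑' k, ∫⁻ x in t k, ENNReal.ofReal |(f' x).det| * g (f x) ∂μ :=
        lintegral_iUnion ht_meas ht _
    _ = ∑' k, ∫⁻ y, g y * (f '' t k).indicator 1 y ∂μ := tsum_congr fun k => by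
        rw [← lintegral_image_eq_lintegral_abs_det_fderiv_mul μ (ht_meas k) (ht' k) (hinj k),
          ← lintegral_indicator (himage k)]
        exact lintegral_congr fun y => by by_cases hy : y ∈ f '' t k <;> simp [hy]
    _ = ∫⁻ y, g y * preimageCount f (⋃ k, t k) y ∂μ := by
        simp only [preimageCount_iUnion_eq_tsum_indicator ht hinj, ← ENNReal.tsum_mul_left]
        exact (lintegral_tsum fun k =>
          (hg.mul (measurable_one.indicator (himage k))).aemeasurable).symm

lemma map_withDensity_abs_det_fderiv_eq_withDensity_preimageCount [μ.IsAddHaarMeasure]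
    (hs : MeasurableSet s) (hf' : ∀ x ∈ s, HasFDerivWithinAt f (f' x) s x)
    (hdet : ∀ x ∈ s, (f' x).det ≠ 0) :
    ((μ.restrict s).withDensity fun x => ENNReal.ofReal |(f' x).det|).map f =
      μ.withDensity (preimageCount f s) := by
  have hf : AEMeasurable f (μ.restrict s) :=
    ContinuousOn.aemeasurable (fun x hx => (hf' x hx).continuousWithinAt) hs
  have hdet_meas := aemeasurable_ofReal_abs_det_fderivWithin μ hs hf'
  refine Measure.ext_of_lintegral _ fun g hg => ?_
  calc ∫⁻ y, g y ∂((μ.restrict s).withDensity fun x => ENNReal.ofReal |(f' x).det|).map f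
      = ∫⁻ x, g (f x) ∂(μ.restrict s).withDensity fun x => ENNReal.ofReal |(f' x).det| :=
        lintegral_map' hg.aemeasurable (hf.mono_ac (withDensity_absolutelyContinuous _ _))
    _ = ∫⁻ x in s, ENNReal.ofReal |(f' x).det| * g (f x) ∂μ :=
        lintegral_withDensity_eq_lintegral_mul₀ hdet_meas (hg.comp_aemeasurable hf)
    _ = ∫⁻ y, g y * preimageCount f s y ∂μ :=
        lintegral_abs_det_fderiv_mul_eq_lintegral_mul_preimageCount hs hf' hdet hg
    _ = ∫⁻ y, g y ∂μ.withDensity (preimageCount f s) := by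
        rw [lintegral_withDensity_eq_lintegral_mul _ (measurable_preimageCount hs hf' hdet) hg,
          mul_comm (preimageCount f s)]
        rfl

lemma lintegral_preimageCount_ne_top [μ.IsAddHaarMeasure] (hs : MeasurableSet s)
    (hf' : ∀ x ∈ s, HasFDerivWithinAt f (f' x) s x) (hdet : ∀ x ∈ s, (f' x).det ≠ 0)
    (hint : IntegrableOn (fun x => (f' x).det) s μ) : ∫⁻ y, preimageCount f s y ∂μ ≠ ∞ := by
  have harea := lintegral_abs_det_fderiv_mul_eq_lintegral_mul_preimageCount (μ := μ) hs hf' hdet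
    measurable_one
  simp only [Pi.one_apply, mul_one, one_mul, ← Real.enorm_eq_ofReal_abs] at harea
  exact harea ▸ hint.2.ne

lemma integrable_preimageCount_toReal [μ.IsAddHaarMeasure] (hs : MeasurableSet s)
    (hf' : ∀ x ∈ s, HasFDerivWithinAt f (f' x) s x) (hdet : ∀ x ∈ s, (f' x).det ≠ 0)
    (hint : IntegrableOn (fun x => (f' x).det) s μ) :
    Integrable (fun y => (preimageCount f s y).toReal) μ :=
  integrable_toReal_of_lintegral_ne_top (measurable_preimageCount hs hf' hdet).aemeasurable
    (lintegral_preimageCount_ne_top hs hf' hdet hint)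

theorem setIntegral_abs_det_fderiv_mul_eq_integral_preimageCount_mul [μ.IsAddHaarMeasure]
    (hs : MeasurableSet s) (hf' : ∀ x ∈ s, HasFDerivWithinAt f (f' x) s x)
    (hdet : ∀ x ∈ s, (f' x).det ≠ 0) (hint : IntegrableOn (fun x => (f' x).det) s μ) {φ : E → ℝ}
    (hφ : Measurable φ) :
    ∫ x in s, |(f' x).det| * φ (f x) ∂μ = ∫ y, (preimageCount f s y).toReal * φ y ∂μ := by
  have hf : AEMeasurable f (μ.restrict s) :=
    ContinuousOn.aemeasurable (fun x hx => (hf' x hx).continuousWithinAt) hs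
  have hcount := measurable_preimageCount hs hf' hdet
  have hcount_lt_top : ∀ᵐ y ∂μ, preimageCount f s y < ∞ :=
    ae_lt_top hcount (lintegral_preimageCount_ne_top hs hf' hdet hint)
  calc ∫ x in s, |(f' x).det| * φ (f x) ∂μ
      = ∫ x, φ (f x) ∂(μ.restrict s).withDensity fun x => ENNReal.ofReal |(f' x).det| := by
        rw [integral_withDensity_eq_integral_toReal_smul₀
          (aemeasurable_ofReal_abs_det_fderivWithin μ hs hf') (by simp)]
        simp only [ENNReal.toReal_ofReal (abs_nonneg _), smul_eq_mul]
    _ = ∫ y, φ y ∂μ.withDensity (preimageCount f s) := by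
        rw [← map_withDensity_abs_det_fderiv_eq_withDensity_preimageCount hs hf' hdet,
          integral_map (hf.mono_ac (withDensity_absolutelyContinuous _ _))
            hφ.aestronglyMeasurable]
    _ = ∫ y, (preimageCount f s y).toReal * φ y ∂μ :=
        integral_withDensity_eq_integral_toReal_smul₀ hcount.aemeasurable hcount_lt_top _

lemma setIntegral_mul_eq_sub_setIntegral_abs_mul {α : Type*} [MeasurableSpace α] {μ : Measure α}
    {s : Set α} {d ψ : α → ℝ} (hs : MeasurableSet s) (hd : Measurable d)
    (hint : IntegrableOn (fun x => d x * ψ x) s μ) :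
    ∫ x in s, d x * ψ x ∂μ =
      (∫ x in s ∩ {x | 0 < d x}, |d x| * ψ x ∂μ) - ∫ x in s ∩ {x | d x < 0}, |d x| * ψ x ∂μ := by
  have hpos : MeasurableSet (s ∩ {x | 0 < d x}) := hs.inter (measurableSet_lt measurable_const hd)
  have hneg : MeasurableSet (s ∩ {x | d x < 0}) := hs.inter (measurableSet_lt hd measurable_const)
  calc ∫ x in s, d x * ψ x ∂μ
      = ∫ x in s ∩ {x | 0 < d x} ∪ s ∩ {x | d x < 0}, d x * ψ x ∂μ :=
        setIntegral_eq_of_subset_of_forall_sdiff_eq_zero hs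
          (union_subset inter_subset_left inter_subset_left) fun x hx => by
            have hd₀ : d x = 0 := le_antisymm (not_lt.1 fun h => hx.2 (.inl ⟨hx.1, h⟩))
              (not_lt.1 fun h => hx.2 (.inr ⟨hx.1, h⟩))
            rw [hd₀, zero_mul]
    _ = (∫ x in s ∩ {x | 0 < d x}, d x * ψ x ∂μ) + ∫ x in s ∩ {x | d x < 0}, d x * ψ x ∂μ :=
        setIntegral_union (disjoint_left.2 fun x hx hx' => lt_asymm (a := d x) hx'.2 hx.2) hneg
          (hint.mono_set inter_subset_left) (hint.mono_set inter_subset_left)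
    _ = _ := by
        rw [sub_eq_add_neg, ← integral_neg]
        exact congr_arg₂ _
          (setIntegral_congr_fun hpos fun x (hx : _ ∧ 0 < d x) => by
            simp only [abs_of_pos hx.2])
          (setIntegral_congr_fun hneg fun x (hx : _ ∧ d x < 0) => by
            simp only [abs_of_neg hx.2, neg_mul, neg_neg])

variable [μ.IsAddHaarMeasure]

lemma integrable_signedPreimageCount (hs : MeasurableSet s)
    (hf' : ∀ x ∈ s, HasFDerivWithinAt f (f' x) s x) (hdet : Measurable fun x => (f' x).det)
    (hint : IntegrableOn (fun x => (f' x).det) s μ) :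
    Integrable (signedPreimageCount f f' s) μ :=
  (integrable_preimageCount_toReal (hs.inter (measurableSet_lt measurable_const hdet))
    (fun x hx => (hf' x hx.1).mono inter_subset_left) (fun _ hx => hx.2.ne')
    (hint.mono_set inter_subset_left)).sub
  (integrable_preimageCount_toReal (hs.inter (measurableSet_lt hdet measurable_const))
    (fun x hx => (hf' x hx.1).mono inter_subset_left) (fun _ hx => hx.2.ne)
    (hint.mono_set inter_subset_left))

theorem integral_signedPreimageCount_mul (hs : MeasurableSet s)
    (hf' : ∀ x ∈ s, HasFDerivWithinAt f (f' x) s x) (hdet : Measurable fun x => (f' x).det)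
    (hint : IntegrableOn (fun x => (f' x).det) s μ) {φ : E → ℝ} (hφ : Measurable φ) {C : ℝ}
    (hC : ∀ y, ‖φ y‖ ≤ C) :
    ∫ y, signedPreimageCount f f' s y * φ y ∂μ = ∫ x in s, (f' x).det * φ (f x) ∂μ := by
  have hf : AEMeasurable f (μ.restrict s) :=
    ContinuousOn.aemeasurable (fun x hx => (hf' x hx).continuousWithinAt) hs
  have hpiece {A : Set E} (hA : MeasurableSet A) (hdetA : ∀ x ∈ s ∩ A, (f' x).det ≠ 0) :
      Integrable (fun y => (preimageCount f (s ∩ A) y).toReal * φ y) μ ∧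
        ∫ x in s ∩ A, |(f' x).det| * φ (f x) ∂μ =
          ∫ y, (preimageCount f (s ∩ A) y).toReal * φ y ∂μ := by
    have hfA : ∀ x ∈ s ∩ A, HasFDerivWithinAt f (f' x) (s ∩ A) x :=
      fun x hx => (hf' x hx.1).mono inter_subset_left
    have hintA := hint.mono_set (inter_subset_left (t := A))
    exact ⟨(integrable_preimageCount_toReal (hs.inter hA) hfA hdetA hintA).mul_bdd (c := C)
        hφ.aestronglyMeasurable (.of_forall hC),
      setIntegral_abs_det_fderiv_mul_eq_integral_preimageCount_mul (hs.inter hA) hfA hdetA hintA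
        hφ⟩
  have hpos := hpiece (measurableSet_lt measurable_const hdet) fun _ hx => ne_of_gt hx.2
  have hneg := hpiece (measurableSet_lt hdet measurable_const) fun _ hx => ne_of_lt hx.2
  rw [setIntegral_mul_eq_sub_setIntegral_abs_mul (ψ := fun x => φ (f x)) hs hdet
    (hint.mul_bdd (c := C) (hφ.comp_aemeasurable hf).aestronglyMeasurable
      (.of_forall fun x => hC _)), hpos.2, hneg.2,
    ← integral_sub hpos.1 hneg.1]
  simp only [signedPreimageCount, sub_mul]

end AreaFormula

section Green

variable {E F G : Type*} [NormedAddCommGroup F] [NormedSpace ℝ F] [NormedAddCommGroup G]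
  [NormedSpace ℝ G] (B : F →L[ℝ] G →L[ℝ] ℝ)

lemma integrable_bilinear_of_hasCompactSupport [TopologicalSpace E] [MeasurableSpace E]
    [OpensMeasurableSpace E] {μ : Measure E} [IsFiniteMeasureOnCompacts μ] {f : E → F} {g : E → G}
    (hf : Continuous f) (hf_supp : HasCompactSupport f) (hg : Continuous g) :
    Integrable (fun x => B (f x) (g x)) μ :=
  ((B.continuous.comp hf).clm_apply hg).integrable_of_hasCompactSupport
    (hf_supp.mono fun x hx hfx => hx (by simp [hfx]))

theorem integral_bilinear_fderiv_fderiv_comm [NormedAddCommGroup E] [NormedSpace ℝ E]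
    [FiniteDimensional ℝ E] [MeasurableSpace E] [BorelSpace E] {μ : Measure E}
    [μ.IsAddHaarMeasure] {f : E → F} {g : E → G} (hf : ContDiff ℝ 1 f)
    (hf_supp : HasCompactSupport f) (hg : ContDiff ℝ 2 g) (v w : E) :
    ∫ x, B (fderiv ℝ f x v) (fderiv ℝ g x w) ∂μ =
      ∫ x, B (fderiv ℝ f x w) (fderiv ℝ g x v) ∂μ := by
  have hdf (v : E) : Continuous fun x => fderiv ℝ f x v :=
    (hf.continuous_fderiv one_ne_zero).clm_apply continuous_const
  have hdg (v : E) : ContDiff ℝ 1 fun x => fderiv ℝ g x v :=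
    (hg.fderiv_right le_rfl).clm_apply contDiff_const
  have hddg (v w : E) : Continuous fun x => fderiv ℝ (fun y => fderiv ℝ g y v) x w :=
    ((hdg v).continuous_fderiv one_ne_zero).clm_apply continuous_const
  have hparts (v w : E) : ∫ x, B (fderiv ℝ f x v) (fderiv ℝ g x w) ∂μ =
      -∫ x, B (f x) (fderiv ℝ (fun y => fderiv ℝ g y w) x v) ∂μ := by
    rw [integral_bilinear_fderiv_right_eq_neg_left_of_integrable
      (integrable_bilinear_of_hasCompactSupport B (hdf v) (hf_supp.fderiv_apply ℝ v)
        (hdg w).continuous)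
      (integrable_bilinear_of_hasCompactSupport B hf.continuous hf_supp (hddg w v))
      (integrable_bilinear_of_hasCompactSupport B hf.continuous hf_supp (hdg w).continuous)
      (fun x _ => hf.differentiable one_ne_zero x)
      (fun x _ => (hdg w).differentiable one_ne_zero x), neg_neg]
  have hsymm (x v w : E) : fderiv ℝ (fun y => fderiv ℝ g y w) x v =
      fderiv ℝ (fun y => fderiv ℝ g y v) x w := by
    have hd : DifferentiableAt ℝ (fderiv ℝ g) x :=
      (hg.fderiv_right le_rfl).differentiable one_ne_zero x
    rw [fderiv_clm_apply hd (differentiableAt_const w),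
      fderiv_clm_apply hd (differentiableAt_const v)]
    simpa using (hg.contDiffAt.isSymmSndFDerivAt (by simp)).eq v w
  rw [hparts v w, hparts w v]
  simp only [hsymm _ v w]

end Green

section Cone

open scoped Matrix

/-- The cone over the surface `u` with apex at the origin, in the coordinates
`x = (s, (p₁, p₂))` with height parameter `s ∈ (0, 1)`. -/
noncomputable def coneMap (u : ℝ × ℝ → Fin 3 → ℝ) (x : Fin 3 → ℝ) : Fin 3 → ℝ :=
  x 0 • u (x 1, x 2)

/-- The parameter domain of the (open) cone over a surface. -/
def coneDomain : Set (Fin 3 → ℝ) := {x | x 0 ∈ Ioo 0 1}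

/-- The winding number of the surface `u` around `y`, encoded as the degree at `y` of the cone
over `u`. -/
noncomputable def windingNumber (u : ℝ × ℝ → Fin 3 → ℝ) : (Fin 3 → ℝ) → ℝ :=
  signedPreimageCount (coneMap u) (fderiv ℝ (coneMap u)) coneDomain

/-- The area normal `u_x ∧ u_y` of the surface `u`. -/
noncomputable def areaNormal (u : ℝ × ℝ → Fin 3 → ℝ) (p : ℝ × ℝ) : Fin 3 → ℝ :=
  pderivX u p ⨯₃ pderivY u p

variable {u : ℝ × ℝ → Fin 3 → ℝ}

lemma contDiff_coneMap {n : ℕ∞} (hu : ContDiff ℝ n u) : ContDiff ℝ n (coneMap u) := by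
  unfold coneMap
  fun_prop

lemma hasFDerivAt_coneMap (hu : Differentiable ℝ u) (x : Fin 3 → ℝ) :
    HasFDerivAt (coneMap u) (x 0 • (fderiv ℝ u (x 1, x 2)).comp
      ((ContinuousLinearMap.proj 1).prod (.proj 2)) +
      (ContinuousLinearMap.proj (R := ℝ) 0).smulRight (u (x 1, x 2))) x :=
  (hasFDerivAt_apply 0 x).smul
    ((hu _).hasFDerivAt.comp x ((hasFDerivAt_apply 1 x).prodMk (hasFDerivAt_apply 2 x)))

lemma det_fderiv_coneMap (hu : Differentiable ℝ u) (x : Fin 3 → ℝ) :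
    (fderiv ℝ (coneMap u) x).det = x 0 ^ 2 * (u (x 1, x 2) ⬝ᵥ areaNormal u (x 1, x 2)) := by
  set p : ℝ × ℝ := (x 1, x 2)
  have hmatrix : LinearMap.toMatrix' (fderiv ℝ (coneMap u) x : (Fin 3 → ℝ) →ₗ[ℝ] Fin 3 → ℝ) =
      (Matrix.of ![u p, x 0 • pderivX u p, x 0 • pderivY u p])ᵀ := by
    ext i j
    rw [(hasFDerivAt_coneMap hu x).fderiv, LinearMap.toMatrix'_apply]
    fin_cases j <;> simp [pderivX, pderivY, ← Prod.zero_eq_mk, p]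
  calc (fderiv ℝ (coneMap u) x).det
      = (Matrix.of ![u p, x 0 • pderivX u p, x 0 • pderivY u p])ᵀ.det := by
        rw [ContinuousLinearMap.det, ← LinearMap.det_toMatrix', hmatrix]
    _ = u p ⬝ᵥ (x 0 • pderivX u p) ⨯₃ (x 0 • pderivY u p) :=
        (Matrix.det_transpose _).trans (triple_product_eq_det _ _ _).symm
    _ = x 0 ^ 2 * (u p ⬝ᵥ areaNormal u p) := by
        simp only [areaNormal, map_smul, LinearMap.smul_apply, dotProduct_smul, smul_eq_mul]
        ring

lemma hasCompactSupport_areaNormal (hu_supp : HasCompactSupport u) :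
    HasCompactSupport (areaNormal u) :=
  (hu_supp.fderiv_apply ℝ (1, 0)).mono fun p hp (hpx : fderiv ℝ u p (1, 0) = 0) => hp (by
    rw [areaNormal, pderivX, hpx, map_zero, LinearMap.zero_apply])

lemma continuous_areaNormal (hu : ContDiff ℝ 1 u) : Continuous (areaNormal u) := by
  have hdu (v : ℝ × ℝ) : Continuous fun p => fderiv ℝ u p v :=
    (hu.continuous_fderiv one_ne_zero).clm_apply continuous_const
  exact ((crossProduct (R := ℝ)).toContinuousBilinearMap.continuous.comp (hdu (1, 0))).clm_apply
    (hdu (0, 1))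

/-- The coordinates `(s, (p₁, p₂))` in which `coneMap` is defined. -/
noncomputable def coneCoord : (Fin 3 → ℝ) ≃ᵐ ℝ × (ℝ × ℝ) :=
  (MeasurableEquiv.piFinSuccAbove (fun _ => ℝ) 0).trans
    (.prodCongr (.refl ℝ) MeasurableEquiv.finTwoArrow)

/-- The measure `ds dp` on the parameter domain `(0, 1) × ℝ²` of a cone. -/
noncomputable def coneMeasure : Measure (ℝ × (ℝ × ℝ)) := (volume.restrict (Ioo 0 1)).prod volume

lemma measurePreserving_coneCoord :
    MeasurePreserving coneCoord (volume.restrict coneDomain) coneMeasure := by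
  have hvolume : MeasurePreserving coneCoord :=
    (((MeasurePreserving.id volume).prod (volume_preserving_finTwoArrow ℝ))).comp
      (volume_preserving_piFinSuccAbove (fun _ => ℝ) 0)
  have hmeasure : coneMeasure = (volume : Measure (ℝ × (ℝ × ℝ))).restrict (Ioo 0 1 ×ˢ univ) := by
    rw [coneMeasure, Measure.volume_eq_prod ℝ (ℝ × ℝ), ← Measure.prod_restrict,
      Measure.restrict_univ]
  have hdomain : coneDomain = coneCoord ⁻¹' (Ioo 0 1 ×ˢ univ) := by
    ext x
    exact (and_iff_left trivial).symm
  rw [hmeasure, hdomain]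
  exact hvolume.restrict_preimage (measurableSet_Ioo.prod .univ)

lemma integrable_coneMeasure_of_continuous {F : ℝ × (ℝ × ℝ) → ℝ} (hF : Continuous F)
    {K : Set (ℝ × ℝ)} (hK : IsCompact K) (hFK : ∀ q, q.2 ∉ K → F q = 0) :
    Integrable F coneMeasure := by
  have hcompact : IntegrableOn F (Icc 0 1 ×ˢ K) (volume.prod volume) :=
    hF.continuousOn.integrableOn_compact (isCompact_Icc.prod hK)
  rw [coneMeasure, ← Measure.restrict_univ (μ := (volume : Measure (ℝ × ℝ))),
    Measure.prod_restrict]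
  refine hcompact.of_forall_sdiff_eq_zero (measurableSet_Ioo.prod .univ) fun q hq => ?_
  exact hFK q fun hqK => hq.2 ⟨Ioo_subset_Icc_self hq.1.1, hqK⟩

lemma integrable_triple_product_mul_comp_smul (hu : ContDiff ℝ 1 u) (hu_supp : HasCompactSupport u)
    {φ : (Fin 3 → ℝ) → ℝ} (hφ : Continuous φ) :
    Integrable (fun q => q.1 ^ 2 * (u q.2 ⬝ᵥ areaNormal u q.2) * φ (q.1 • u q.2)) coneMeasure := by
  have hu_snd : Continuous fun q : ℝ × (ℝ × ℝ) => u q.2 := hu.continuous.comp continuous_snd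
  refine integrable_coneMeasure_of_continuous (((continuous_fst.pow 2).mul
    (hu_snd.dotProduct ((continuous_areaNormal hu).comp continuous_snd))).mul
      (hφ.comp (continuous_fst.smul hu_snd))) hu_supp fun q hq => ?_
  rw [image_eq_zero_of_notMem_tsupport hq, zero_dotProduct, mul_zero, zero_mul]

lemma measurable_det_fderiv_coneMap (hu : ContDiff ℝ 1 u) :
    Measurable fun x => (fderiv ℝ (coneMap u) x).det :=
  (ContinuousLinearMap.continuous_det.comp
    ((contDiff_coneMap hu).continuous_fderiv one_ne_zero)).measurable

lemma integrableOn_det_fderiv_coneMap (hu : ContDiff ℝ 1 u) (hu_supp : HasCompactSupport u) :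
    IntegrableOn (fun x => (fderiv ℝ (coneMap u) x).det) coneDomain := by
  have hint := integrable_triple_product_mul_comp_smul hu hu_supp
    (continuous_const (y := (1 : ℝ)))
  simp only [mul_one] at hint
  simp only [det_fderiv_coneMap (hu.differentiable one_ne_zero)]
  exact (measurePreserving_coneCoord.integrable_comp_emb coneCoord.measurableEmbedding).2 hint

lemma measurableSet_coneDomain : MeasurableSet coneDomain :=
  measurableSet_Ioo.preimage (measurable_pi_apply 0)

lemma integrable_windingNumber (hu : ContDiff ℝ 1 u) (hu_supp : HasCompactSupport u) :
    Integrable (windingNumber u) :=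
  integrable_signedPreimageCount measurableSet_coneDomain
    (fun _ _ => ((contDiff_coneMap hu).differentiable one_ne_zero _).hasFDerivAt.hasFDerivWithinAt)
    (measurable_det_fderiv_coneMap hu) (integrableOn_det_fderiv_coneMap hu hu_supp)

lemma integral_windingNumber_mul (hu : ContDiff ℝ 1 u) (hu_supp : HasCompactSupport u)
    {φ : (Fin 3 → ℝ) → ℝ} (hφ : Measurable φ) {C : ℝ} (hC : ∀ y, ‖φ y‖ ≤ C) :
    ∫ y, windingNumber u y * φ y =
      ∫ q, q.1 ^ 2 * (u q.2 ⬝ᵥ areaNormal u q.2) * φ (q.1 • u q.2) ∂coneMeasure := by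
  rw [← measurePreserving_coneCoord.integral_comp coneCoord.measurableEmbedding]
  refine (integral_signedPreimageCount_mul measurableSet_coneDomain
    (fun _ _ => ((contDiff_coneMap hu).differentiable one_ne_zero _).hasFDerivAt.hasFDerivWithinAt)
    (measurable_det_fderiv_coneMap hu) (integrableOn_det_fderiv_coneMap hu hu_supp) hφ hC).trans ?_
  simp only [det_fderiv_coneMap (hu.differentiable one_ne_zero)]
  rfl

lemma integral_windingNumber (hu : ContDiff ℝ 1 u) (hu_supp : HasCompactSupport u) :
    ∫ y, windingNumber u y = (∫ p, u p ⬝ᵥ areaNormal u p) / 3 := by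
  have hcone := integral_windingNumber_mul hu hu_supp (φ := fun _ => 1) measurable_const
    (C := 1) (by simp)
  simp only [mul_one] at hcone
  rw [hcone, coneMeasure, integral_prod_mul (fun s : ℝ => s ^ 2) fun p => u p ⬝ᵥ areaNormal u p,
    ← integral_Ioc_eq_integral_Ioo, ← intervalIntegral.integral_of_le zero_le_one, integral_pow]
  ring

lemma hasCompactSupport_windingNumber (hu : Continuous u) (hu_supp : HasCompactSupport u) :
    HasCompactSupport (windingNumber u) := by
  obtain ⟨C, hC⟩ := hu_supp.exists_bound_of_continuous hu
  refine .intro (isCompact_closedBall (0 : Fin 3 → ℝ) C) fun y hy => signedPreimageCount_eq_zero ?_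
  rintro ⟨x, hx : x 0 ∈ Ioo 0 1, rfl⟩
  refine hy (mem_closedBall_zero_iff.2 ?_)
  calc ‖x 0 • u (x 1, x 2)‖ = x 0 * ‖u (x 1, x 2)‖ := by
        rw [norm_smul, Real.norm_of_nonneg hx.1.le]
    _ ≤ 1 * C := mul_le_mul hx.2.le (hC _) (norm_nonneg _) zero_le_one
    _ = C := one_mul C

end Cone

section Stokes

open scoped Matrix ContDiff

variable {u : ℝ × ℝ → Fin 3 → ℝ} {φ : (Fin 3 → ℝ) → ℝ}

lemma triple_product_smul_eq {R : Type*} [CommRing R] (a b c v : Fin 3 → R) :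
    (a ⬝ᵥ b ⨯₃ c) • v = (v ⬝ᵥ b ⨯₃ c) • a + (v ⬝ᵥ c ⨯₃ a) • b + (v ⬝ᵥ a ⨯₃ b) • c := by
  ext i
  fin_cases i <;>
  · simp only [dotProduct, cross_apply, Fin.sum_univ_three, Matrix.cons_val, Fin.zero_eta,
      Fin.mk_one, Fin.reduceFinMk, Pi.add_apply, Pi.smul_apply, smul_eq_mul]
    ring

lemma integral_triple_product_fderiv_sub_eq_zero {f : ℝ × ℝ → Fin 3 → ℝ} (hf : ContDiff ℝ 1 f)
    (hf_supp : HasCompactSupport f) (hu : ContDiff ℝ 2 u) (v : Fin 3 → ℝ) :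
    ∫ p, (v ⬝ᵥ pderivX f p ⨯₃ pderivY u p - v ⬝ᵥ pderivY f p ⨯₃ pderivX u p) = 0 := by
  let B := (crossProduct.compr₂ (dotProductEquiv ℝ (Fin 3) v)).toContinuousBilinearMap
  have hint (h k : ℝ × ℝ) :
      Integrable fun p => v ⬝ᵥ fderiv ℝ f p h ⨯₃ fderiv ℝ u p k :=
    integrable_bilinear_of_hasCompactSupport B
      ((hf.continuous_fderiv one_ne_zero).clm_apply continuous_const) (hf_supp.fderiv_apply ℝ h)
      ((hu.continuous_fderiv two_ne_zero).clm_apply continuous_const)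
  exact (integral_sub (hint _ _) (hint _ _)).trans
    (sub_eq_zero.2 (integral_bilinear_fderiv_fderiv_comm B hf hf_supp hu _ _))

lemma fderiv_comp_smul_smul (hu : Differentiable ℝ u) (hφ : Differentiable ℝ φ) (s : ℝ)
    (p h : ℝ × ℝ) :
    fderiv ℝ (fun p => φ (s • u p) • u p) p h =
      (s * fderiv ℝ φ (s • u p) (fderiv ℝ u p h)) • u p + φ (s • u p) • fderiv ℝ u p h := by
  have hφu : HasFDerivAt (fun p => φ (s • u p))
      ((fderiv ℝ φ (s • u p)).comp (s • fderiv ℝ u p)) p :=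
    (hφ _).hasFDerivAt.comp p ((hu p).hasFDerivAt.const_smul s)
  rw [(hφu.fun_smul (hu p).hasFDerivAt).fderiv]
  simp [add_comm]

lemma hasDerivAt_sq_mul_comp_smul (hφ : Differentiable ℝ φ) (y : Fin 3 → ℝ) (s : ℝ) :
    HasDerivAt (fun s => s ^ 2 * φ (s • y))
      (2 * s * φ (s • y) + s ^ 2 * fderiv ℝ φ (s • y) y) s := by
  have hφy : HasDerivAt (fun s : ℝ => φ (s • y)) (fderiv ℝ φ (s • y) ((1 : ℝ) • y)) s :=
    (hφ (s • y)).hasFDerivAt.comp_hasDerivAt s ((hasDerivAt_id s).smul_const y)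
  simpa using (hasDerivAt_pow 2 s).fun_mul hφy

lemma continuous_deriv_sq_mul_comp_smul (hφ : ContDiff ℝ 1 φ) :
    Continuous fun z : ℝ × (Fin 3 → ℝ) => deriv (fun s => s ^ 2 * φ (s • z.2)) z.1 := by
  have hsmul : Continuous fun z : ℝ × (Fin 3 → ℝ) => z.1 • z.2 := continuous_fst.smul continuous_snd
  have hdφ := ((hφ.continuous_fderiv one_ne_zero).comp hsmul).clm_apply continuous_snd
  simp only [(hasDerivAt_sq_mul_comp_smul (hφ.differentiable one_ne_zero) _ _).deriv]
  exact ((continuous_const.mul continuous_fst).mul (hφ.continuous.comp hsmul)).add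
    ((continuous_fst.pow 2).mul hdφ)

lemma integrable_deriv_sq_mul_comp_smul_mul (hu : Continuous u) (hφ : ContDiff ℝ 1 φ)
    {g : ℝ × ℝ → ℝ} (hg : Continuous g) (hg_supp : HasCompactSupport g) :
    Integrable (fun q => deriv (fun s => s ^ 2 * φ (s • u q.2)) q.1 * g q.2) coneMeasure :=
  integrable_coneMeasure_of_continuous
    (((continuous_deriv_sq_mul_comp_smul hφ).comp
      (continuous_fst.prodMk (hu.comp continuous_snd))).mul (hg.comp continuous_snd)) hg_supp
    fun q hq => by rw [image_eq_zero_of_notMem_tsupport hq, mul_zero]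

lemma integral_deriv_sq_mul_comp_smul_mul (hu : Continuous u) (hφ : ContDiff ℝ 1 φ)
    {g : ℝ × ℝ → ℝ} (hg : Continuous g) (hg_supp : HasCompactSupport g) :
    ∫ q, deriv (fun s => s ^ 2 * φ (s • u q.2)) q.1 * g q.2 ∂coneMeasure =
      ∫ p, φ (u p) * g p := by
  rw [coneMeasure, integral_prod_symm _ (integrable_deriv_sq_mul_comp_smul_mul hu hφ hg hg_supp)]
  refine integral_congr_ae (.of_forall fun p => ?_)
  have hderiv (s : ℝ) := (hasDerivAt_sq_mul_comp_smul (hφ.differentiable one_ne_zero)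
    (u p) s).differentiableAt.hasDerivAt
  have hcont : Continuous (deriv fun s => s ^ 2 * φ (s • u p)) :=
    (continuous_deriv_sq_mul_comp_smul hφ).comp (continuous_id.prodMk continuous_const)
  simp only [integral_mul_const]
  rw [← integral_Ioc_eq_integral_Ioo, ← intervalIntegral.integral_of_le zero_le_one,
    intervalIntegral.integral_eq_sub_of_hasDerivAt (fun s _ => hderiv s)
      (hcont.intervalIntegrable 0 1)]
  simp

-- Cramer's rule splits `v` along `u`, `u_x` and `u_y`. The `u`-component is a radial derivative,
-- up to a term which combines with the tangential components into a null Lagrangian.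
lemma triple_product_mul_fderiv_eq (hu : Differentiable ℝ u) (hφ : Differentiable ℝ φ)
    (v : Fin 3 → ℝ) (s : ℝ) (p : ℝ × ℝ) :
    s ^ 2 * (u p ⬝ᵥ areaNormal u p) * fderiv ℝ φ (s • u p) v =
      deriv (fun s => s ^ 2 * φ (s • u p)) s * (v ⬝ᵥ areaNormal u p) -
        s * (v ⬝ᵥ pderivX (fun p => φ (s • u p) • u p) p ⨯₃ pderivY u p -
          v ⬝ᵥ pderivY (fun p => φ (s • u p) • u p) p ⨯₃ pderivX u p) := by
  have hcramer := congr_arg (fderiv ℝ φ (s • u p))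
    (triple_product_smul_eq (u p) (pderivX u p) (pderivY u p) v)
  simp only [map_add, map_smul, smul_eq_mul] at hcramer
  rw [mul_assoc, areaNormal, hcramer, (hasDerivAt_sq_mul_comp_smul hφ _ s).deriv]
  simp only [pderivX, pderivY, fderiv_comp_smul_smul hu hφ, map_add, map_smul, LinearMap.add_apply,
    LinearMap.smul_apply, dotProduct_add, dotProduct_smul, smul_eq_mul]
  rw [← cross_anticomm (u p) (fderiv ℝ u p (0, 1)),
    ← cross_anticomm (fderiv ℝ u p (1, 0)) (fderiv ℝ u p (0, 1)), dotProduct_neg, dotProduct_neg]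
  ring

theorem integral_windingNumber_mul_fderiv (hu : ContDiff ℝ 2 u) (hu_supp : HasCompactSupport u)
    (hφ : ContDiff ℝ 1 φ) (hφ_supp : HasCompactSupport φ) (v : Fin 3 → ℝ) :
    ∫ y, windingNumber u y * fderiv ℝ φ y v = ∫ p, φ (u p) * (v ⬝ᵥ areaNormal u p) := by
  have hu₁ : ContDiff ℝ 1 u := hu.of_le one_le_two
  have hdφ : Continuous fun y => fderiv ℝ φ y v :=
    (hφ.continuous_fderiv one_ne_zero).clm_apply continuous_const
  obtain ⟨C, hC⟩ := (hφ_supp.fderiv_apply ℝ v).exists_bound_of_continuous hdφ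
  have hN : Continuous fun p => v ⬝ᵥ areaNormal u p :=
    continuous_const.dotProduct (continuous_areaNormal hu₁)
  have hN_supp : HasCompactSupport fun p => v ⬝ᵥ areaNormal u p :=
    (hasCompactSupport_areaNormal hu_supp).comp_left (g := (v ⬝ᵥ ·)) (dotProduct_zero v)
  have hradial_int := integrable_deriv_sq_mul_comp_smul_mul hu.continuous hφ hN hN_supp
  have htangential_int := hradial_int.sub
    (integrable_triple_product_mul_comp_smul hu₁ hu_supp hdφ)
  have hsplit (q : ℝ × (ℝ × ℝ)) := triple_product_mul_fderiv_eq (hu.differentiable two_ne_zero)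
    (hφ.differentiable one_ne_zero) v q.1 q.2
  have htangential : ∫ q, (deriv (fun s => s ^ 2 * φ (s • u q.2)) q.1 * (v ⬝ᵥ areaNormal u q.2) -
      q.1 ^ 2 * (u q.2 ⬝ᵥ areaNormal u q.2) * fderiv ℝ φ (q.1 • u q.2) v) ∂coneMeasure = 0 := by
    refine (integral_prod _ htangential_int).trans (integral_eq_zero_of_ae (.of_forall fun s => ?_))
    have hslice : ContDiff ℝ 1 fun p => φ (s • u p) • u p :=
      (hφ.comp (hu₁.const_smul s)).smul hu₁
    have hslice_supp : HasCompactSupport fun p => φ (s • u p) • u p :=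
      hu_supp.mono (Function.support_smul_subset_right (fun p => φ (s • u p)) u)
    simp only [Pi.sub_apply, hsplit, sub_sub_cancel, integral_const_mul, Pi.zero_apply]
    rw [integral_triple_product_fderiv_sub_eq_zero hslice hslice_supp hu, mul_zero]
  rw [integral_windingNumber_mul hu₁ hu_supp hdφ.measurable hC,
    ← integral_deriv_sq_mul_comp_smul_mul hu.continuous hφ hN hN_supp]
  rw [integral_sub hradial_int (integrable_triple_product_mul_comp_smul hu₁ hu_supp hdφ)]
    at htangential
  exact (sub_eq_zero.1 htangential).symm

end Stokes

section AreaMeasure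

open WithLp
open scoped Matrix ContDiff

variable {u : ℝ × ℝ → Fin 3 → ℝ}

/-- The surface area of `u` as a measure on space, that is, the push-forward of
`|u_x ∧ u_y| dx dy` under `u`. -/
noncomputable def areaMeasure (u : ℝ × ℝ → Fin 3 → ℝ) : Measure (EuclideanSpace ℝ (Fin 3)) :=
  (volume.withDensity fun p => ‖toLp 2 (areaNormal u p)‖ₑ).map (toLp 2 ∘ u)

lemma integral_areaMeasure (hu : ContDiff ℝ 1 u) {g : EuclideanSpace ℝ (Fin 3) → ℝ}
    (hg : Continuous g) :
    ∫ y, g y ∂areaMeasure u = ∫ p, ‖toLp 2 (areaNormal u p)‖ * g (toLp 2 (u p)) := by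
  have hN : Continuous fun p => toLp 2 (areaNormal u p) :=
    (PiLp.continuous_toLp 2 _).comp (continuous_areaNormal hu)
  rw [areaMeasure, integral_map ((PiLp.continuous_toLp 2 _).comp hu.continuous).aemeasurable
    hg.aestronglyMeasurable,
    integral_withDensity_eq_integral_toReal_smul hN.enorm.measurable
      (.of_forall fun p => enorm_lt_top)]
  simp only [toReal_enorm, smul_eq_mul, Function.comp_apply]

lemma integral_abs_comp_mul_dotProduct_areaNormal_le (hu : ContDiff ℝ 1 u)
    (hu_supp : HasCompactSupport u) {g : EuclideanSpace ℝ (Fin 3) → ℝ} (hg : Continuous g)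
    (v : EuclideanSpace ℝ (Fin 3)) :
    |∫ p, g (toLp 2 (u p)) * (ofLp v ⬝ᵥ areaNormal u p)| ≤ ‖v‖ * ∫ y, |g y| ∂areaMeasure u := by
  have hN : Continuous fun p => toLp 2 (areaNormal u p) :=
    (PiLp.continuous_toLp 2 _).comp (continuous_areaNormal hu)
  have hN_supp : HasCompactSupport fun p => ‖toLp 2 (areaNormal u p)‖ :=
    (hasCompactSupport_areaNormal hu_supp).comp_left (g := fun w => ‖toLp 2 w‖) norm_zero
  have hint : Integrable fun p => ‖toLp 2 (areaNormal u p)‖ * |g (toLp 2 (u p))| :=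
    (hN.norm.mul (hg.comp ((PiLp.continuous_toLp 2 _).comp hu.continuous)).abs)
      |>.integrable_of_hasCompactSupport hN_supp.mul_right
  rw [integral_areaMeasure hu hg.abs, ← integral_const_mul]
  rw [← Real.norm_eq_abs]
  refine norm_integral_le_of_norm_le (hint.const_mul ‖v‖) (.of_forall fun p => ?_)
  have hcauchy : |ofLp v ⬝ᵥ areaNormal u p| ≤ ‖v‖ * ‖toLp 2 (areaNormal u p)‖ := by
    simpa [EuclideanSpace.inner_eq_star_dotProduct, dotProduct_comm] using
      abs_real_inner_le_norm v (toLp 2 (areaNormal u p))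
  calc ‖g (toLp 2 (u p)) * (ofLp v ⬝ᵥ areaNormal u p)‖
      = |g (toLp 2 (u p))| * |ofLp v ⬝ᵥ areaNormal u p| := norm_mul _ _
    _ ≤ |g (toLp 2 (u p))| * (‖v‖ * ‖toLp 2 (areaNormal u p)‖) := by gcongr
    _ = ‖v‖ * (‖toLp 2 (areaNormal u p)‖ * |g (toLp 2 (u p))|) := by ring

theorem variationLE_windingNumber (hu : ContDiff ℝ 2 u) (hu_supp : HasCompactSupport u) :
    VariationLE (fun x => windingNumber u (ofLp x)) (areaMeasure u) := by
  intro φ hφ hφ_supp v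
  let e := (EuclideanSpace.equiv (Fin 3) ℝ).symm
  have hstokes := integral_windingNumber_mul_fderiv hu hu_supp
    ((hφ.of_le (mod_cast le_top)).comp e.contDiff) (hφ_supp.comp_homeomorph e.toHomeomorph) (ofLp v)
  have htransfer : ∫ x, windingNumber u (ofLp x) * fderiv ℝ φ x v =
      ∫ y, windingNumber u y * fderiv ℝ (φ ∘ e) y (ofLp v) := by
    rw [← (PiLp.volume_preserving_toLp (Fin 3)).integral_comp
      (MeasurableEquiv.toLp 2 _).measurableEmbedding]
    simp only [e.comp_right_fderiv]
    rfl
  rw [htransfer, hstokes]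
  exact integral_abs_comp_mul_dotProduct_areaNormal_le (hu.of_le one_le_two) hu_supp
    hφ.continuous v

lemma norm_toLp_crossProduct_le (a b : Fin 3 → ℝ) :
    ‖toLp 2 (a ⨯₃ b)‖ ≤ (a ⬝ᵥ a + b ⬝ᵥ b) / 2 := by
  have hsq (c : Fin 3 → ℝ) : ‖toLp 2 c‖ ^ 2 = c ⬝ᵥ c :=
    (EuclideanSpace.real_norm_sq_eq _).trans (Finset.sum_congr rfl fun i _ => sq (c i))
  calc ‖toLp 2 (a ⨯₃ b)‖ ≤ ‖toLp 2 a‖ * ‖toLp 2 b‖ := by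
        rw [InnerProductGeometry.norm_toLp_symm_crossProduct]
        exact mul_le_of_le_one_right (by positivity) (sin_le_one _)
    _ ≤ (a ⬝ᵥ a + b ⬝ᵥ b) / 2 := by
        rw [← hsq, ← hsq]
        linarith [two_mul_le_add_sq ‖toLp 2 a‖ ‖toLp 2 b‖]

lemma areaMeasure_univ_le (hu : ContDiff ℝ 1 u) (hu_supp : HasCompactSupport u) :
    areaMeasure u univ ≤ ENNReal.ofReal (dirEnergy univ u / 2) := by
  have hint (v : ℝ × ℝ) : Integrable fun p => fderiv ℝ u p v ⬝ᵥ fderiv ℝ u p v :=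
    have hcont := (hu.continuous_fderiv one_ne_zero).clm_apply continuous_const
    (hcont.dotProduct hcont).integrable_of_hasCompactSupport
      ((hu_supp.fderiv_apply ℝ v).comp_left (g := fun w => w ⬝ᵥ w) (dotProduct_zero 0))
  have hdensity : Integrable fun p =>
      (pderivX u p ⬝ᵥ pderivX u p + pderivY u p ⬝ᵥ pderivY u p) / 2 :=
    ((hint _).add (hint _)).div_const 2
  calc areaMeasure u univ = ∫⁻ p, ‖toLp 2 (areaNormal u p)‖ₑ := by
        rw [areaMeasure, Measure.map_apply
          ((PiLp.continuous_toLp 2 _).comp hu.continuous).measurable .univ, preimage_univ,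
          withDensity_apply _ .univ, setLIntegral_univ]
    _ ≤ ∫⁻ p, ENNReal.ofReal ((pderivX u p ⬝ᵥ pderivX u p + pderivY u p ⬝ᵥ pderivY u p) / 2) := by
        refine lintegral_mono fun p => ?_
        rw [← ofReal_norm]
        exact ENNReal.ofReal_le_ofReal (norm_toLp_crossProduct_le _ _)
    _ = ENNReal.ofReal (dirEnergy univ u / 2) := by
        rw [← ofReal_integral_eq_lintegral_ofReal hdensity
          (.of_forall fun p => (norm_nonneg _).trans (norm_toLp_crossProduct_le _ _)),
          integral_div, dirEnergy, setIntegral_univ]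
        rfl

end AreaMeasure

section Isoperimetric

open WithLp
open scoped Matrix ContDiff

variable {u : ℝ × ℝ → Fin 3 → ℝ}

lemma isoperimetricConst_three_pow : isoperimetricConst 3 ^ 3 = ENNReal.ofReal (36 * π) := by
  rw [isoperimetricConst, mul_pow, ENNReal.rpow_inv_natCast_pow three_ne_zero,
    EuclideanSpace.volume_ball_fin_three, ENNReal.ofReal_one, one_pow, one_mul,
    ← ENNReal.ofReal_natCast, ← ENNReal.ofReal_pow (by positivity),
    ← ENNReal.ofReal_mul (by positivity)]
  congr 1
  norm_num
  ring

lemma enorm_windingNumber_le_rpow {p : ℝ} (hp : 1 ≤ p) (y : Fin 3 → ℝ) :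
    ‖windingNumber u y‖ₑ ≤ ‖windingNumber u y‖ₑ ^ p := by
  obtain ⟨k, hk⟩ : windingNumber u y ∈ range ((↑) : ℤ → ℝ) :=
    signedPreimageCount_mem_range_intCast y
  rw [← hk]
  rcases eq_or_ne k 0 with rfl | hk₀
  · simp
  · have hk₁ : (1 : ℝ≥0∞) ≤ ‖(k : ℝ)‖ₑ := by
      rw [← ofReal_norm, ENNReal.one_le_ofReal, Real.norm_eq_abs]
      exact_mod_cast Int.one_le_abs hk₀
    exact ENNReal.le_rpow_self_of_one_le hk₁ hp

lemma enorm_vol_univ_le_lintegral_windingNumber_rpow (hu : ContDiff ℝ 1 u)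
    (hu_supp : HasCompactSupport u) {p : ℝ} (hp : 1 ≤ p) :
    ‖vol univ u / 3‖ₑ ≤ ∫⁻ x : EuclideanSpace ℝ (Fin 3), ‖windingNumber u (ofLp x)‖ₑ ^ p := by
  have hvol : vol univ u / 3 = ∫ y, windingNumber u y := by
    rw [integral_windingNumber hu hu_supp, vol, setIntegral_univ]
    rfl
  calc ‖vol univ u / 3‖ₑ ≤ ∫⁻ y, ‖windingNumber u y‖ₑ := hvol ▸ enorm_integral_le_lintegral_enorm _
    _ ≤ ∫⁻ y, ‖windingNumber u y‖ₑ ^ p := lintegral_mono fun y => enorm_windingNumber_le_rpow hp y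
    _ = ∫⁻ x : EuclideanSpace ℝ (Fin 3), ‖windingNumber u (ofLp x)‖ₑ ^ p :=
        ((PiLp.volume_preserving_ofLp (Fin 3)).lintegral_comp_emb
          (MeasurableEquiv.toLp 2 _).symm.measurableEmbedding _).symm

lemma dirEnergy_nonneg (Ω : Set (ℝ × ℝ)) (u : ℝ × ℝ → Fin 3 → ℝ) : 0 ≤ dirEnergy Ω u :=
  have hdot (a : Fin 3 → ℝ) : 0 ≤ dot3 a a := Finset.sum_nonneg fun i _ => mul_self_nonneg (a i)
  integral_nonneg fun _ => add_nonneg (hdot _) (hdot _)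

lemma dirEnergy_eq_univ {Ω : Set (ℝ × ℝ)} (huΩ : tsupport u ⊆ Ω) :
    dirEnergy Ω u = dirEnergy univ u := by
  rw [dirEnergy, dirEnergy, setIntegral_univ]
  refine setIntegral_eq_integral_of_forall_compl_eq_zero fun p hp => ?_
  rw [pderivX, pderivY, fderiv_of_notMem_tsupport ℝ fun h => hp (huΩ h)]
  simp [dot3]

lemma vol_eq_univ {Ω : Set (ℝ × ℝ)} (huΩ : tsupport u ⊆ Ω) : vol Ω u = vol univ u := by
  rw [vol, vol, setIntegral_univ]
  refine setIntegral_eq_integral_of_forall_compl_eq_zero fun p hp => ?_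
  rw [image_eq_zero_of_notMem_tsupport fun h => hp (huΩ h)]
  simp [dot3]

theorem isoperimetric_inequality_dirEnergy (hu : ContDiff ℝ 2 u) (hu_supp : HasCompactSupport u) :
    32 * π * vol univ u ^ 2 ≤ dirEnergy univ u ^ 3 := by
  have hu₁ : ContDiff ℝ 1 u := hu.of_le one_le_two
  have henergy : 0 ≤ dirEnergy univ u / 2 := div_nonneg (dirEnergy_nonneg _ _) zero_le_two
  have harea := areaMeasure_univ_le hu₁ hu_supp
  have : IsFiniteMeasure (areaMeasure u) := ⟨harea.trans_lt ENNReal.ofReal_lt_top⟩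
  have hp : ((3 : ℕ) : ℝ).HolderConjugate (3 / 2) := by
    rw [Real.holderConjugate_iff]; norm_num
  have hsobolev := (variationLE_windingNumber hu hu_supp).isoperimetricConst_mul_lintegral_rpow_le
    hp ((PiLp.volume_preserving_ofLp (Fin 3)).integrable_comp_of_integrable
      (integrable_windingNumber hu₁ hu_supp))
    ((hasCompactSupport_windingNumber hu.continuous hu_supp).comp_homeomorph
      (EuclideanSpace.equiv (Fin 3) ℝ).toHomeomorph)
  have hroot : isoperimetricConst 3 * ‖vol univ u / 3‖ₑ ^ (3 / 2 : ℝ)⁻¹ ≤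
      ENNReal.ofReal (dirEnergy univ u / 2) := by
    refine le_trans ?_ (hsobolev.trans harea)
    gcongr
    exact enorm_vol_univ_le_lintegral_windingNumber_rpow hu₁ hu_supp (by norm_num)
  have hcubed : ENNReal.ofReal (36 * π * (vol univ u / 3) ^ 2) ≤
      ENNReal.ofReal ((dirEnergy univ u / 2) ^ 3) := by
    calc ENNReal.ofReal (36 * π * (vol univ u / 3) ^ 2)
        = (isoperimetricConst 3 * ‖vol univ u / 3‖ₑ ^ (3 / 2 : ℝ)⁻¹) ^ 3 := by
          rw [mul_pow, isoperimetricConst_three_pow, ← ENNReal.rpow_mul_natCast,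
            ENNReal.ofReal_mul (by positivity), Real.enorm_eq_ofReal_abs,
            show (3 / 2 : ℝ)⁻¹ * (3 : ℕ) = (2 : ℕ) by norm_num, ENNReal.rpow_natCast,
            ← ENNReal.ofReal_pow (abs_nonneg _), sq_abs]
      _ ≤ ENNReal.ofReal (dirEnergy univ u / 2) ^ 3 := by gcongr
      _ = ENNReal.ofReal ((dirEnergy univ u / 2) ^ 3) := (ENNReal.ofReal_pow henergy 3).symm
  rw [ENNReal.ofReal_le_ofReal_iff (pow_nonneg henergy 3)] at hcubed
  linarith

end Isoperimetric

theorem depth_lower_bound_general (Ω : Set (ℝ × ℝ)) (H : ℝ) (hH : H ≠ 0) (δ : ℝ) (hδ : δ ≤ 3 / 2)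
    (u : ℝ × ℝ → Fin 3 → ℝ) (hu : ContDiff ℝ 2 u) (hu_supp : HasCompactSupport u)
    (huΩ : tsupport u ⊆ Ω) (hD : Dfun Ω H δ u = 0) (hne : dnorm Ω u ≠ 0) :
    aPW δ * rPW H δ ^ 2 ≤ Efun Ω H u := by
  have hS : 0 < dirEnergy Ω u := Real.sqrt_ne_zero'.1 hne
  have hiso := isoperimetric_inequality_dirEnergy hu hu_supp
  rw [← dirEnergy_eq_univ huΩ, ← vol_eq_univ huΩ] at hiso
  rw [Dfun] at hD
  have hE : Efun Ω H u = aPW δ * dirEnergy Ω u := by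
    rw [Efun, aPW]
    linear_combination hD / 3
  have hr : rPW H δ ^ 2 = 8 * π * δ ^ 2 / H ^ 2 := by
    rw [rPW, div_pow, mul_pow, mul_pow, Real.sq_sqrt (by positivity)]
    ring
  have hV : δ ^ 2 * dirEnergy Ω u ^ 2 = 4 * H ^ 2 * vol Ω u ^ 2 := by
    linear_combination (δ * dirEnergy Ω u - 2 * H * vol Ω u) * hD
  have hr_le : rPW H δ ^ 2 ≤ dirEnergy Ω u := by
    rw [hr, div_le_iff₀ (by positivity)]
    refine le_of_mul_le_mul_right ?_ (pow_pos hS 2)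
    calc 8 * π * δ ^ 2 * dirEnergy Ω u ^ 2 = H ^ 2 * (32 * π * vol Ω u ^ 2) := by
          linear_combination 8 * π * hV
      _ ≤ H ^ 2 * dirEnergy Ω u ^ 3 := by gcongr
      _ = dirEnergy Ω u * H ^ 2 * dirEnergy Ω u ^ 2 := by ring
  rw [hE]
  exact mul_le_mul_of_nonneg_left hr_le (by rw [aPW]; linarith)

/-- For `0 < δ < 3/2`, any `u` on the δ-Nehari manifold satisfies
`E(u) ≥ a(δ)·r(δ)²`, so the depth `d(δ)` satisfies `d(δ) ≥ a(δ)r(δ)²`. -/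
theorem depth_lower_bound (Ω : Set (ℝ × ℝ)) (hΩ : IsOpen Ω)
    (hΩb : Bornology.IsBounded Ω) (H : ℝ) (hH : 0 < H) (δ : ℝ)
    (hδ0 : 0 < δ) (hδ1 : δ < 3 / 2) (u : ℝ × ℝ → Fin 3 → ℝ)
    (hu : IsAdmissible Ω u) (hD : Dfun Ω H δ u = 0) (hne : dnorm Ω u ≠ 0) :
    aPW δ * (rPW H δ) ^ 2 ≤ Efun Ω H u :=
  depth_lower_bound_general Ω H hH.ne' δ hδ1.le u (contDiff_infty.1 hu.1 2) hu.2.1 hu.2.2 hD hne
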